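/- arXiv:2410.03467 — 4 statements merged into one kernel-verified Lean document; each statement's English description precedes it below -/
import Mathlib

section
/- Let n be a positive integer and let F be a field whose characteristic is 0 or an odd rational prime p. Then the anti-centralizer C̄(b) of the generator b in the group algebra F V_{8n} is an F-subspace of dimension 4n−2 if n is odd, and 4n−4 if n is even; moreover the set {(a^{2k} − a^{−2k})b^j : 1 ≤ k ≤ ⌊(n−1)/2⌋, 0 ≤ j ≤ 3} ∪ {(a^{2k−1} − a^{−(2k−1)}b^2), (a^{2k−1} − a^{−(2k−1)}b^2)b : 1 ≤ k ≤ ⌊(n+1)/2⌋} ∪ {(a^{−(2k−1)} − a^{2k−1}b^2), (a^{−(2k−1)} − a^{2k−1}b^2)b : 1 ≤ k ≤ ⌈(n−1)/2⌉} is a basis of C̄(b) over F. -/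
/-- The relators of the presentation
`V_{8n} = ⟨a, b ∣ a^{2n} = b⁴ = 1, (ba)² = 1, (b⁻¹a)² = 1⟩`,
where `a` is the generator indexed by `0` and `b` the one indexed by `1`.
(The relations `ba = a⁻¹b⁻¹` and `b⁻¹a = a⁻¹b` are equivalent to
`(ba)² = 1` and `(b⁻¹a)² = 1` respectively.) -/
def V8nRels (n : ℕ) : Set (FreeGroup (Fin 2)) :=
  {(FreeGroup.of 0) ^ (2 * n), (FreeGroup.of 1) ^ 4,
   (FreeGroup.of 1 * FreeGroup.of 0) ^ 2,
   ((FreeGroup.of 1)⁻¹ * FreeGroup.of 0) ^ 2}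

/-- The group `V_{8n}` of order `8n`. -/
abbrev V8n (n : ℕ) : Type := PresentedGroup (V8nRels n)

/-- The generator `a` of `V_{8n}`. -/
def aV (n : ℕ) : V8n n := PresentedGroup.of 0

/-- The generator `b` of `V_{8n}`. -/
def bV (n : ℕ) : V8n n := PresentedGroup.of 1
/-- The anti-centralizer `C̄(β) = {α ∣ α * β = -(β * α)}` of an element `β` of an
`F`-algebra `A`, as an `F`-subspace of `A`. -/
def antiCentralizer (F : Type*) [CommSemiring F] {A : Type*} [Ring A] [Algebra F A]
    (β : A) : Submodule F A where
  carrier := {α | α * β = -(β * α)}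
  zero_mem' := by simp
  add_mem' := by
    intro x y hx hy
    simp only [Set.mem_setOf_eq] at *
    rw [add_mul, mul_add, hx, hy, neg_add]
  smul_mem' := by
    intro c x hx
    simp only [Set.mem_setOf_eq] at *
    rw [smul_mul_assoc, hx, mul_smul_comm, smul_neg]

/-- The claimed basis of the anti-centralizer `C̄(b)` in `F V_{8n}`:
`{(a^{2k} − a^{−2k})b^j : 1 ≤ k ≤ ⌊(n−1)/2⌋, 0 ≤ j ≤ 3}
  ∪ {(a^{2k−1} − a^{−(2k−1)}b²), (a^{2k−1} − a^{−(2k−1)}b²)b : 1 ≤ k ≤ ⌊(n+1)/2⌋}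
  ∪ {(a^{−(2k−1)} − a^{2k−1}b²), (a^{−(2k−1)} − a^{2k−1}b²)b : 1 ≤ k ≤ ⌈(n−1)/2⌉}`
(note `⌈(n-1)/2⌉ = (n - 1 + 1) / 2` in natural division). -/
def antiCentralizerBasisB (n : ℕ) (F : Type*) [Field F] : Set (MonoidAlgebra F (V8n n)) :=
  let a := aV n
  let b := bV n
  let σ := MonoidAlgebra.of F (V8n n)
  {x | ∃ k j : ℕ, 1 ≤ k ∧ k ≤ (n - 1) / 2 ∧ j ≤ 3 ∧
      x = (σ (a ^ (2 * k)) - σ (a⁻¹ ^ (2 * k))) * σ b ^ j} ∪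
  {x | ∃ k : ℕ, 1 ≤ k ∧ k ≤ (n + 1) / 2 ∧
      (x = σ (a ^ (2 * k - 1)) - σ (a⁻¹ ^ (2 * k - 1) * b ^ 2) ∨
       x = (σ (a ^ (2 * k - 1)) - σ (a⁻¹ ^ (2 * k - 1) * b ^ 2)) * σ b)} ∪
  {x | ∃ k : ℕ, 1 ≤ k ∧ k ≤ (n - 1 + 1) / 2 ∧
      (x = σ (a⁻¹ ^ (2 * k - 1)) - σ (a ^ (2 * k - 1) * b ^ 2) ∨
       x = (σ (a⁻¹ ^ (2 * k - 1)) - σ (a ^ (2 * k - 1) * b ^ 2)) * σ b)}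

namespace V8nAux

/-- Abstract linear algebra: an involution on the group and a transversal of its
two-element orbits. -/
theorem abstract_indep {F : Type*} [Field F] {G : Type*} {φ : G → G}
    {ι : Type*} [Fintype ι] {τ : ι → G} (hinj : Function.Injective τ)
    (hdis : ∀ i j, φ (τ i) ≠ τ j) :
    LinearIndependent F (fun i => (MonoidAlgebra.single (τ i) (1 : F) -
      MonoidAlgebra.single (φ (τ i)) 1 : MonoidAlgebra F G)) := by
  classical
  rw [Fintype.linearIndependent_iff]
  intro g hg i
  have h := congrArg (fun x : MonoidAlgebra F G => x.coeff (τ i)) hg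
  simpa [MonoidAlgebra.coeff_sum, Finsupp.single_apply, hdis, hinj.eq_iff,
    Finsupp.finsetSum_apply] using h

theorem abstract_span {F : Type*} [Field F] (h2 : (2 : F) ≠ 0) {G : Type*} {φ : G → G}
    (hφ : ∀ g, φ (φ g) = g)
    {ι : Type*} [Fintype ι] {τ : ι → G} (hinj : Function.Injective τ)
    (hdis : ∀ i j, φ (τ i) ≠ τ j)
    (hcov : ∀ g, φ g ≠ g → (∃ i, τ i = g) ∨ ∃ i, τ i = φ g)
    (α : MonoidAlgebra F G) (hα : ∀ g, α.coeff (φ g) = - α.coeff g) :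
    α = ∑ i, α.coeff (τ i) • (MonoidAlgebra.single (τ i) (1 : F) -
      MonoidAlgebra.single (φ (τ i)) 1 : MonoidAlgebra F G) := by
  classical
  have hφi : Function.Injective φ := fun x y h => by rw [← hφ x, h, hφ]
  have hdis' : ∀ i j, τ i ≠ φ (τ j) := fun i j h => hdis j i h.symm
  ext g
  by_cases hg : φ g = g
  · have h0 : α.coeff g = 0 := by
      have := hα g
      rw [hg] at this
      have h3 : 2 * α.coeff g = 0 := by linear_combination this
      exact (mul_eq_zero.1 h3).resolve_left h2
    have h1 : ∀ i, τ i ≠ g := fun i h => hdis i i (by rw [h, hg])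
    have h1' : ∀ i, φ (τ i) ≠ g := fun i h => hdis i i (by rw [h, ← hφ (τ i), h, hg])
    simp [MonoidAlgebra.coeff_sum, Finsupp.single_apply, Finsupp.finsetSum_apply, h0, h1, h1']
  · rcases hcov g hg with ⟨i, rfl⟩ | ⟨i, hi⟩
    · simp [MonoidAlgebra.coeff_sum, Finsupp.single_apply, hdis, hinj.eq_iff,
        Finsupp.finsetSum_apply]
    · obtain rfl : g = φ (τ i) := by rw [hi, hφ]
      simp [MonoidAlgebra.coeff_sum, Finsupp.single_apply, hdis', hinj.eq_iff, hφi.eq_iff,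
        Finsupp.finsetSum_apply, hα]

theorem mem_antiCentralizer_of {F : Type*} [Field F] {G : Type*} [Group G] (b : G)
    (α : MonoidAlgebra F G) :
    α ∈ antiCentralizer F (MonoidAlgebra.of F G b) ↔
      ∀ g, α.coeff (b * g * b⁻¹) = - α.coeff g := by
  change α * _ = -(_ * α) ↔ _
  constructor
  · intro h g
    have := congrArg (fun x : MonoidAlgebra F G => x.coeff (b * g)) h
    simpa [MonoidAlgebra.of_apply, MonoidAlgebra.coeff_single_mul_apply,
      MonoidAlgebra.coeff_mul_single_apply] using this
  · intro h
    ext g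
    have := h (b⁻¹ * g)
    simpa [MonoidAlgebra.of_apply, MonoidAlgebra.coeff_single_mul_apply,
      MonoidAlgebra.coeff_mul_single_apply, mul_assoc] using this

/-! ### Relations in the group -/

theorem rel_a (n : ℕ) : aV n ^ (2 * n) = 1 :=
  PresentedGroup.one_of_mem (rels := V8nRels n) (x := (FreeGroup.of 0) ^ (2 * n))
    (by simp [V8nRels])

theorem rel_b (n : ℕ) : bV n ^ 4 = 1 :=
  PresentedGroup.one_of_mem (rels := V8nRels n) (x := (FreeGroup.of 1) ^ 4)
    (by simp [V8nRels])

theorem rel_ba (n : ℕ) : (bV n * aV n) ^ 2 = 1 :=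
  PresentedGroup.one_of_mem (rels := V8nRels n)
    (x := (FreeGroup.of 1 * FreeGroup.of 0) ^ 2) (by simp [V8nRels])

theorem rel_ba' (n : ℕ) : ((bV n)⁻¹ * aV n) ^ 2 = 1 :=
  PresentedGroup.one_of_mem (rels := V8nRels n)
    (x := ((FreeGroup.of 1)⁻¹ * FreeGroup.of 0) ^ 2) (by simp [V8nRels])

theorem comm_bb_a (n : ℕ) : Commute (bV n ^ 2) (aV n) := by
  have h1 := rel_ba n
  have h2 := rel_ba' n
  have h4 := rel_b n
  generalize aV n = a at *
  generalize bV n = b at *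
  have e1 : b * a * b = a⁻¹ := by
    rw [pow_two] at h1
    have := eq_inv_of_mul_eq_one_left (a := b * a * b) (b := a) (by simpa [mul_assoc] using h1)
    exact this
  have e2 : b⁻¹ * a * b⁻¹ = a⁻¹ := by
    rw [pow_two] at h2
    exact eq_inv_of_mul_eq_one_left (by simpa [mul_assoc] using h2)
  have e3 : b ^ 2 * a * b ^ 2 = a := by
    calc b ^ 2 * a * b ^ 2 = b * (b * a * b) * b := by simp only [pow_two, mul_assoc]
      _ = b * (b⁻¹ * a * b⁻¹) * b := by rw [e1, e2]
      _ = a := by group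
  have e4 : b ^ 2 * b ^ 2 = 1 := by rw [← pow_add]; exact h4
  change b ^ 2 * a = a * b ^ 2
  calc b ^ 2 * a = b ^ 2 * a * (b ^ 2 * b ^ 2) := by rw [e4, mul_one]
    _ = (b ^ 2 * a * b ^ 2) * b ^ 2 := by simp only [mul_assoc]
    _ = a * b ^ 2 := by rw [e3]

theorem b_a (n : ℕ) : bV n * aV n = (aV n)⁻¹ * bV n ^ 2 * bV n := by
  have h1 := rel_ba n
  have h4 := rel_b n
  have h5 : bV n ^ 2 * bV n * bV n = 1 := by rw [← h4]; group
  have h6 : bV n ^ 2 * bV n = (bV n)⁻¹ := eq_inv_of_mul_eq_one_left h5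
  rw [mul_assoc, h6, ← mul_inv_rev]
  exact eq_inv_of_mul_eq_one_left (by rw [← pow_two]; exact h1)

theorem b_apow (n k : ℕ) :
    bV n * aV n ^ k = (aV n)⁻¹ ^ k * bV n ^ (2 * k) * bV n := by
  induction k with
  | zero => simp
  | succ k ih =>
    have hc : bV n ^ (2 * k) * (aV n)⁻¹ = (aV n)⁻¹ * bV n ^ (2 * k) := by
      rw [pow_mul]
      exact ((comm_bb_a n).pow_left k).inv_right
    calc bV n * aV n ^ (k + 1) = (bV n * aV n ^ k) * aV n := by rw [pow_succ, mul_assoc]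
      _ = (aV n)⁻¹ ^ k * bV n ^ (2 * k) * (bV n * aV n) := by rw [ih, mul_assoc]
      _ = (aV n)⁻¹ ^ k * (bV n ^ (2 * k) * (aV n)⁻¹) * bV n ^ 2 * bV n := by
          rw [b_a]; simp only [mul_assoc]
      _ = _ := by
          rw [hc, pow_succ (aV n)⁻¹ k, mul_add, mul_one, pow_add (bV n) (2 * k) 2]
          simp only [mul_assoc]

/-! ### The permutation model -/

/-- The homomorphism `i ↦ 2 i` from `ℤ/2n` to `ℤ/4`. -/
def dbl (n : ℕ) : ZMod (2 * n) →+ ZMod 4 :=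
  ZMod.lift (2 * n) ⟨zmultiplesHom (ZMod 4) 2, by
    have h4 : (4 : ZMod 4) = 0 := by decide
    simp only [zmultiplesHom_apply, zsmul_eq_mul]
    push_cast
    linear_combination (n : ZMod 4) * h4⟩

theorem dbl_nat (n k : ℕ) : dbl n (k : ZMod (2 * n)) = 2 * (k : ZMod 4) := by
  have := ZMod.lift_coe (2 * n) (A := ZMod 4) ⟨zmultiplesHom (ZMod 4) 2, by
    have h4 : (4 : ZMod 4) = 0 := by decide
    simp only [zmultiplesHom_apply, zsmul_eq_mul]
    push_cast
    linear_combination (n : ZMod 4) * h4⟩ (k : ℤ)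
  have e : (k : ZMod (2 * n)) = ((k : ℤ) : ZMod (2 * n)) := (Int.cast_natCast k).symm
  rw [e, dbl]
  refine this.trans ?_
  simp [mul_comm]

theorem dbl_one (n : ℕ) : dbl n 1 = 2 := by
  have := dbl_nat n 1
  simpa using this

/-- Left translation by `a`. -/
def pa (n : ℕ) : Equiv.Perm (ZMod (2 * n) × ZMod 4) where
  toFun x := (x.1 + 1, x.2)
  invFun x := (x.1 - 1, x.2)
  left_inv x := by simp
  right_inv x := by simp

/-- Left translation by `b`. -/
def pb (n : ℕ) : Equiv.Perm (ZMod (2 * n) × ZMod 4) where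
  toFun x := (-x.1, x.2 + 1 + dbl n x.1)
  invFun x := (-x.1, x.2 - 1 + dbl n x.1)
  left_inv x := by
    ext
    · simp
    · simp
      ring
  right_inv x := by
    ext
    · simp
    · simp
      ring

theorem pa_pow (n k : ℕ) (x : ZMod (2 * n) × ZMod 4) :
    (pa n ^ k) x = (x.1 + k, x.2) := by
  induction k with
  | zero => simp
  | succ k ih =>
    rw [pow_succ', Equiv.Perm.mul_apply, ih]
    simp [pa, add_assoc]

theorem rho_rel (n : ℕ) : ∀ r ∈ V8nRels n, FreeGroup.lift ![pa n, pb n] r = 1 := by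
  have h4 : (4 : ZMod 4) = 0 := by decide
  intro r hr
  simp only [V8nRels, Set.mem_insert_iff, Set.mem_singleton_iff] at hr
  rcases hr with rfl | rfl | rfl | rfl
  · ext x
    · have : (2 * n : ZMod (2 * n)) = 0 := by exact_mod_cast ZMod.natCast_self (2 * n)
      simp [pa_pow, this]
    · simp [pa_pow]
  · ext x
    · simp [pow_succ, pb]
    · simp [pow_succ, pb]
      linear_combination h4
  · ext x
    · simp [pow_succ, pb, pa]
    · simp [pow_succ, pb, pa, dbl_one]
      linear_combination h4
  · ext x
    · simp [pow_succ, pb, pa, Equiv.Perm.inv_def, Equiv.symm]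
    · simp [pow_succ, pb, pa, dbl_one, Equiv.Perm.inv_def, Equiv.symm]
      try ring

/-- The permutation representation. -/
def rho (n : ℕ) : V8n n →* Equiv.Perm (ZMod (2 * n) × ZMod 4) :=
  PresentedGroup.toGroup (rho_rel n)

theorem rho_a (n : ℕ) : rho n (aV n) = pa n := PresentedGroup.toGroup.of (rho_rel n)

theorem rho_b (n : ℕ) : rho n (bV n) = pb n := PresentedGroup.toGroup.of (rho_rel n)

/-- The normal form map. -/
def nf (n : ℕ) (x : ZMod (2 * n) × ZMod 4) : V8n n := aV n ^ x.1.val * bV n ^ x.2.val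

theorem nf_nat (n i j : ℕ) : nf n (i, j) = aV n ^ i * bV n ^ j := by
  simp only [nf, ZMod.val_natCast]
  rw [← pow_eq_pow_mod _ (rel_a n), ← pow_eq_pow_mod _ (rel_b n)]

theorem neg_cast (n : ℕ) (hn : 0 < n) (i : ℕ) :
    (-(i : ZMod (2 * n))) = ((i * (2 * n - 1) : ℕ) : ZMod (2 * n)) := by
  have : (2 * n : ZMod (2 * n)) = 0 := by exact_mod_cast ZMod.natCast_self (2 * n)
  rw [Nat.cast_mul, Nat.cast_sub (by omega)]
  push_cast
  linear_combination -(i : ZMod (2 * n)) * this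

theorem nf_neg (n : ℕ) (hn : 0 < n) (i j : ℕ) :
    nf n (-(i : ZMod (2 * n)), j) = (aV n)⁻¹ ^ i * bV n ^ j := by
  rw [neg_cast n hn, nf_nat]
  congr 1
  rw [inv_pow]
  apply eq_inv_of_mul_eq_one_left
  rw [← pow_add, ← Nat.mul_succ, Nat.succ_eq_add_one, Nat.sub_add_cancel (by omega), mul_comm,
    pow_mul, rel_a, one_pow]

theorem exists_nat (n : ℕ) (hn : 0 < n) (x : ZMod (2 * n) × ZMod 4) :
    ∃ i j : ℕ, i < 2 * n ∧ j < 4 ∧ x = ((i : ZMod (2 * n)), (j : ZMod 4)) := by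
  have : NeZero (2 * n) := ⟨by omega⟩
  exact ⟨x.1.val, x.2.val, ZMod.val_lt _, ZMod.val_lt _, by simp⟩

theorem nf_pa (n : ℕ) (hn : 0 < n) (x) : nf n (pa n x) = aV n * nf n x := by
  obtain ⟨i, j, -, -, rfl⟩ := exists_nat n hn x
  have : pa n ((i : ZMod (2 * n)), (j : ZMod 4)) = (((i + 1 : ℕ) : ZMod (2 * n)), (j : ZMod 4)) := by
    simp [pa]
  rw [this, nf_nat, nf_nat, pow_succ', mul_assoc]

theorem nf_pb (n : ℕ) (hn : 0 < n) (x) : nf n (pb n x) = bV n * nf n x := by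
  obtain ⟨i, j, -, -, rfl⟩ := exists_nat n hn x
  have : pb n ((i : ZMod (2 * n)), (j : ZMod 4)) =
      (-(i : ZMod (2 * n)), ((2 * i + 1 + j : ℕ) : ZMod 4)) := by
    simp [pb, dbl_nat]; ring
  rw [this, nf_neg n hn, nf_nat, ← mul_assoc, b_apow, pow_add, pow_add]
  simp only [mul_assoc, pow_one]

theorem nf_mul_b (n : ℕ) (hn : 0 < n) (x) : nf n x * bV n = nf n (x.1, x.2 + 1) := by
  obtain ⟨i, j, -, -, rfl⟩ := exists_nat n hn x
  have : ((j : ZMod 4) + 1) = ((j + 1 : ℕ) : ZMod 4) := by simp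
  simp only [this]
  rw [nf_nat, nf_nat, pow_succ, mul_assoc]

theorem nf_rho (n : ℕ) (hn : 0 < n) (g : V8n n) : ∀ x, nf n (rho n g x) = g * nf n x := by
  let H : Subgroup (V8n n) :=
    { carrier := {g | ∀ x, nf n (rho n g x) = g * nf n x}
      one_mem' := by simp
      mul_mem' := by
        intro g h hg hh x
        rw [map_mul, Equiv.Perm.mul_apply, hg, hh, mul_assoc]
      inv_mem' := by
        intro g hg x
        have := hg (rho n g⁻¹ x)
        rw [← Equiv.Perm.mul_apply, ← map_mul, mul_inv_cancel, map_one, Equiv.Perm.one_apply] at this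
        rw [this, inv_mul_cancel_left] }
  have := PresentedGroup.generated_by (V8nRels n) H (by
    intro j
    fin_cases j
    · intro x
      change nf n (rho n (aV n) x) = aV n * nf n x
      rw [rho_a, nf_pa n hn]
    · intro x
      change nf n (rho n (bV n) x) = bV n * nf n x
      rw [rho_b, nf_pb n hn])
  exact this g

theorem nf_zero (n : ℕ) : nf n (0, 0) = 1 := by
  have := nf_nat n 0 0
  simpa using this

theorem nf_surj (n : ℕ) (hn : 0 < n) : Function.Surjective (nf n) := fun g =>
  ⟨rho n g (0, 0), by rw [nf_rho n hn, nf_zero, mul_one]⟩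

theorem pb_pow (n k : ℕ) :
    (pb n ^ k) (0, 0) = (0, (k : ZMod 4)) := by
  induction k with
  | zero => simp
  | succ k ih =>
    rw [pow_succ', Equiv.Perm.mul_apply, ih]
    simp [pb]

theorem nf_inj (n : ℕ) (hn : 0 < n) : Function.Injective (nf n) := by
  have : ∀ x, rho n (nf n x) (0, 0) = x := by
    intro x
    obtain ⟨i, j, -, -, rfl⟩ := exists_nat n hn x
    rw [nf_nat, map_mul, map_pow, map_pow, rho_a, rho_b, Equiv.Perm.mul_apply, pb_pow, pa_pow]
    simp
  intro x y h
  rw [← this x, h, this]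

/-- Conjugation by `b` in normal form. -/
def cj (n : ℕ) (x : ZMod (2 * n) × ZMod 4) : ZMod (2 * n) × ZMod 4 := (-x.1, x.2 + dbl n x.1)

theorem nf_cj (n : ℕ) (hn : 0 < n) (x) : bV n * nf n x * (bV n)⁻¹ = nf n (cj n x) := by
  rw [mul_inv_eq_iff_eq_mul, nf_mul_b n hn, ← nf_pb n hn]
  simp [pb, cj]; ring_nf

theorem cj_cj (n : ℕ) (x) : cj n (cj n x) = x := by
  ext <;> simp [cj]

/-! ### The transversal -/

/-- Index type of the basis. -/
abbrev Idx (n : ℕ) : Type := (Fin ((n - 1) / 2) × Fin 4) ⊕ (Fin n × Fin 2)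

/-- The transversal. -/
def tr (n : ℕ) : Idx n → ZMod (2 * n) × ZMod 4
  | .inl (k, j) => (((2 * ((k : ℕ) + 1) : ℕ) : ZMod (2 * n)), ((j : ℕ) : ZMod 4))
  | .inr (k, j) => (((2 * (k : ℕ) + 1 : ℕ) : ZMod (2 * n)), ((j : ℕ) : ZMod 4))

theorem cast_inj {m i j : ℕ} (hi : i < m) (hj : j < m)
    (h : (i : ZMod m) = (j : ZMod m)) : i = j := by
  rw [ZMod.natCast_eq_natCast_iff'] at h
  rwa [Nat.mod_eq_of_lt hi, Nat.mod_eq_of_lt hj] at h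

theorem neg_cast_eq {m i j : ℕ} (h : -(i : ZMod m) = (j : ZMod m)) : m ∣ i + j := by
  rw [← ZMod.natCast_eq_zero_iff]
  push_cast
  linear_combination -h

theorem tr_inj (n : ℕ) : Function.Injective (tr n) := by
  rintro (⟨k, j⟩ | ⟨k, j⟩) (⟨k', j'⟩ | ⟨k', j'⟩) h <;>
  · simp only [tr, Prod.mk.injEq] at h
    have h1 := cast_inj (by omega) (by omega) h.1
    have h2 := cast_inj (by omega) (by omega) h.2
    first
    | omega
    | (congr 2 <;> ext <;> omega)

theorem dbl_even (n k : ℕ) : dbl n ((2 * k : ℕ) : ZMod (2 * n)) = 0 := by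
  have h4 : (4 : ZMod 4) = 0 := by decide
  rw [dbl_nat]; push_cast; linear_combination (k : ZMod 4) * h4

theorem dbl_odd (n k : ℕ) : dbl n ((2 * k + 1 : ℕ) : ZMod (2 * n)) = 2 := by
  have h4 : (4 : ZMod 4) = 0 := by decide
  rw [dbl_nat]; push_cast; linear_combination (k : ZMod 4) * h4

theorem tr_dis (n : ℕ) (x y : Idx n) : cj n (tr n x) ≠ tr n y := by
  intro h
  rcases x with ⟨k, j⟩ | ⟨k, j⟩ <;> rcases y with ⟨k', j'⟩ | ⟨k', j'⟩ <;>
    simp only [tr, cj, Prod.mk.injEq] at h <;> have h1 := neg_cast_eq h.1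
  · have := Nat.le_of_dvd (by omega) h1
    omega
  · have := (Nat.dvd_mul_right 2 n).trans h1
    omega
  · have := (Nat.dvd_mul_right 2 n).trans h1
    omega
  · have h2 := h.2
    rw [dbl_odd] at h2
    have h3 : ((j + 2 : ℕ) : ZMod 4) = ((j' : ℕ) : ZMod 4) := by push_cast; exact h2
    have := cast_inj (by omega) (by omega) h3
    omega

theorem tr_cov (n : ℕ) (hn : 0 < n) (x) (hx : cj n x ≠ x) :
    (∃ i, tr n i = x) ∨ ∃ i, tr n i = cj n x := by
  obtain ⟨i, j, hi, hj, rfl⟩ := exists_nat n hn x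
  have h2n : (2 * n : ZMod (2 * n)) = 0 := by exact_mod_cast ZMod.natCast_self (2 * n)
  have h4 : (4 : ZMod 4) = 0 := by decide
  have hneg : ∀ i m : ℕ, i + m = 2 * n → -(i : ZMod (2 * n)) = (m : ZMod (2 * n)) := by
    intro i m h
    have : (i : ZMod (2 * n)) + m = 0 := by
      rw [← h2n]; exact_mod_cast congrArg (Nat.cast : ℕ → ZMod (2 * n)) h
    linear_combination -this
  rcases Nat.even_or_odd' i with ⟨k, rfl | rfl⟩
  · rw [cj] at *
    simp only [dbl_even, add_zero] at *
    have hk0 : k ≠ 0 := by rintro rfl; simp at hx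
    have hkn : 2 * k ≠ n := by
      intro h
      apply hx
      rw [hneg (2 * k) (2 * k) (by omega)]
    rcases lt_or_ge (2 * k) n with h | h
    · left
      refine ⟨.inl (⟨k - 1, by omega⟩, ⟨j, hj⟩), ?_⟩
      simp only [tr]
      rw [Nat.sub_add_cancel (by omega)]
    · right
      refine ⟨.inl (⟨n - k - 1, by omega⟩, ⟨j, hj⟩), ?_⟩
      simp only [tr]
      rw [hneg (2 * k) (2 * (n - k - 1 + 1)) (by omega)]
  · rcases lt_or_ge j 2 with h | h
    · left
      exact ⟨.inr (⟨k, by omega⟩, ⟨j, h⟩), rfl⟩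
    · right
      refine ⟨.inr (⟨n - k - 1, by omega⟩, ⟨j - 2, by omega⟩), ?_⟩
      simp only [tr, cj]
      rw [dbl_odd, hneg (2 * k + 1) (2 * (n - k - 1) + 1) (by omega), Nat.cast_sub h]
      ext
      · rfl
      · push_cast
        linear_combination -h4

/-- The basis family. -/
noncomputable def fam (n : ℕ) (F : Type*) [Field F] (i : Idx n) : MonoidAlgebra F (V8n n) :=
  MonoidAlgebra.single (nf n (tr n i)) (1 : F) -
    MonoidAlgebra.single (bV n * nf n (tr n i) * (bV n)⁻¹) 1

theorem fam_inl (n : ℕ) (hn : 0 < n) (F : Type*) [Field F] (k j) :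
    fam n F (.inl (k, j)) = (MonoidAlgebra.of F (V8n n) (aV n ^ (2 * ((k : ℕ) + 1))) -
      MonoidAlgebra.of F (V8n n) ((aV n)⁻¹ ^ (2 * ((k : ℕ) + 1)))) *
        MonoidAlgebra.of F (V8n n) (bV n) ^ (j : ℕ) := by
  rw [fam, nf_cj n hn]
  simp only [tr, cj, dbl_even, add_zero]
  rw [nf_nat, nf_neg n hn, sub_mul, ← map_pow, ← map_mul, ← map_mul]
  rfl

theorem fam_inr (n : ℕ) (hn : 0 < n) (F : Type*) [Field F] (k j) :
    fam n F (.inr (k, j)) = (MonoidAlgebra.of F (V8n n) (aV n ^ (2 * (k : ℕ) + 1)) -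
      MonoidAlgebra.of F (V8n n) ((aV n)⁻¹ ^ (2 * (k : ℕ) + 1) * bV n ^ 2)) *
        MonoidAlgebra.of F (V8n n) (bV n) ^ (j : ℕ) := by
  rw [fam, nf_cj n hn]
  simp only [tr, cj, dbl_odd]
  have : (((j : ℕ) : ZMod 4) + 2) = ((2 + j : ℕ) : ZMod 4) := by push_cast; ring
  rw [this, nf_nat, nf_neg n hn, sub_mul, ← map_pow, ← map_mul, ← map_mul, pow_add (bV n) 2 j,
    ← mul_assoc]
  rfl

theorem a_flip (n i m : ℕ) (h : i + m = 2 * n) : (aV n)⁻¹ ^ i = aV n ^ m := by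
  rw [inv_pow]
  symm
  apply eq_inv_of_mul_eq_one_left
  rw [← pow_add, add_comm, h, rel_a]

theorem a_flip' (n i m : ℕ) (h : i + m = 2 * n) : aV n ^ i = (aV n)⁻¹ ^ m :=
  (a_flip n m i (by omega)).symm

theorem fam_inr' (n : ℕ) (hn : 0 < n) (F : Type*) [Field F] (k : Fin n) (j : Fin 2) (m : ℕ)
    (hm : m + k = n) (hm1 : 1 ≤ m) :
    fam n F (.inr (k, j)) = (MonoidAlgebra.of F (V8n n) ((aV n)⁻¹ ^ (2 * m - 1)) -
      MonoidAlgebra.of F (V8n n) (aV n ^ (2 * m - 1) * bV n ^ 2)) *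
        MonoidAlgebra.of F (V8n n) (bV n) ^ (j : ℕ) := by
  rw [fam_inr n hn, a_flip n (2 * k + 1) (2 * m - 1) (by omega),
    a_flip' n (2 * k + 1) (2 * m - 1) (by omega)]

theorem range_fam (n : ℕ) (hn : 0 < n) (F : Type*) [Field F] :
    Set.range (fam n F) = antiCentralizerBasisB n F := by
  ext x
  constructor
  · rintro ⟨⟨k, j⟩ | ⟨k, j⟩, rfl⟩
    · left; left
      exact ⟨k + 1, j, by omega, by omega, by omega, fam_inl n hn F k j⟩
    · rcases le_or_gt (2 * (k : ℕ) + 1) n with h | h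
      · left; right
        refine ⟨k + 1, by omega, by omega, ?_⟩
        rw [fam_inr n hn, show 2 * ((k : ℕ) + 1) - 1 = 2 * k + 1 by omega]
        fin_cases j
        · left; simp
        · right; simp
      · right
        refine ⟨n - k, by omega, by omega, ?_⟩
        rw [fam_inr' n hn F k j (n - k) (by omega) (by omega)]
        fin_cases j
        · left; simp
        · right; simp
  · rintro ((⟨k, j, h1, h2, h3, rfl⟩ | ⟨k, h1, h2, h⟩) | ⟨k, h1, h2, h⟩)
    · refine ⟨.inl (⟨k - 1, by omega⟩, ⟨j, by omega⟩), ?_⟩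
      rw [fam_inl n hn]
      simp only [Nat.sub_add_cancel h1]
    · have e : 2 * (k - 1) + 1 = 2 * k - 1 := by omega
      rcases h with rfl | rfl
      · refine ⟨.inr (⟨k - 1, by omega⟩, 0), ?_⟩
        rw [fam_inr n hn]
        simp [e]
      · refine ⟨.inr (⟨k - 1, by omega⟩, 1), ?_⟩
        rw [fam_inr n hn]
        simp [e]
    · rcases h with rfl | rfl
      · refine ⟨.inr (⟨n - k, by omega⟩, 0), ?_⟩
        rw [fam_inr' n hn F _ _ k (by simp; omega) h1]
        simp
      · refine ⟨.inr (⟨n - k, by omega⟩, 1), ?_⟩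
        rw [fam_inr' n hn F _ _ k (by simp; omega) h1]
        simp

theorem conj_conj (n : ℕ) (hn : 0 < n) (g : V8n n) :
    bV n * (bV n * g * (bV n)⁻¹) * (bV n)⁻¹ = g := by
  obtain ⟨x, rfl⟩ := nf_surj n hn g
  rw [nf_cj n hn, nf_cj n hn, cj_cj]

theorem dis (n : ℕ) (hn : 0 < n) (i j : Idx n) :
    (fun g => bV n * g * (bV n)⁻¹) (nf n (tr n i)) ≠ nf n (tr n j) := by
  intro h
  simp only [nf_cj n hn] at h
  exact tr_dis n i j (nf_inj n hn h)

theorem fam_indep (n : ℕ) (hn : 0 < n) (F : Type*) [Field F] :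
    LinearIndependent F (fam n F) :=
  abstract_indep (φ := fun g => bV n * g * (bV n)⁻¹) ((nf_inj n hn).comp (tr_inj n)) (dis n hn)

theorem fam_span (n : ℕ) (hn : 0 < n) (F : Type*) [Field F] (h2 : (2 : F) ≠ 0) :
    Submodule.span F (Set.range (fam n F)) =
      antiCentralizer F (MonoidAlgebra.of F (V8n n) (bV n)) := by
  apply le_antisymm
  · rw [Submodule.span_le]
    rintro _ ⟨i, rfl⟩
    rw [SetLike.mem_coe, mem_antiCentralizer_of]
    intro g
    classical
    have e : ∀ g h : V8n n, bV n * g * (bV n)⁻¹ = bV n * h * (bV n)⁻¹ ↔ g = h := by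
      intro g h; simp
    have e' : nf n (tr n i) = bV n * g * (bV n)⁻¹ ↔ bV n * nf n (tr n i) * (bV n)⁻¹ = g := by
      rw [← e, conj_conj n hn]
    simp only [fam, MonoidAlgebra.coeff_sub, MonoidAlgebra.coeff_single, Finsupp.sub_apply,
      Finsupp.single_apply, e, e']
    ring
  · intro α hα
    rw [mem_antiCentralizer_of] at hα
    rw [abstract_span h2 (φ := fun g => bV n * g * (bV n)⁻¹) (conj_conj n hn)
      ((nf_inj n hn).comp (tr_inj n)) (dis n hn) ?_ α hα]
    · exact Submodule.sum_mem _ fun i _ => Submodule.smul_mem _ _ (Submodule.subset_span ⟨i, rfl⟩)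
    · intro g hg
      obtain ⟨x, rfl⟩ := nf_surj n hn g
      simp only [nf_cj n hn, Function.comp] at *
      rcases tr_cov n hn x (fun h => hg (by rw [h])) with ⟨i, hi⟩ | ⟨i, hi⟩
      · exact Or.inl ⟨i, by rw [hi]⟩
      · exact Or.inr ⟨i, by rw [hi]⟩

theorem two_ne (F : Type*) [Field F]
    (hchar : CharZero F ∨ ∃ p : ℕ, p.Prime ∧ Odd p ∧ CharP F p) : (2 : F) ≠ 0 := by
  rcases hchar with h | ⟨p, hp, ho, hc⟩
  · exact two_ne_zero
  · intro h
    have h' : ((2 : ℕ) : F) = 0 := by exact_mod_cast h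
    rw [CharP.cast_eq_zero_iff F p] at h'
    have := (Nat.prime_dvd_prime_iff_eq hp Nat.prime_two).1 h'
    subst this
    exact absurd ho (by decide)

theorem card_Idx (n : ℕ) : Fintype.card (Idx n) = 4 * ((n - 1) / 2) + 2 * n := by
  simp [Idx, mul_comm]

end V8nAux

/-- If `char F` is `0` or an odd prime, then the anti-centralizer
`C̄(b)` in `F V_{8n}` has dimension `4n−2` over `F` when `n` is odd and `4n−4` when
`n` is even, and the set `antiCentralizerBasisB n F` is a basis of it. -/
theorem antiCentralizer_b_V8n (n : ℕ) (hn : 0 < n) (F : Type*) [Field F]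
    (hchar : CharZero F ∨ ∃ p : ℕ, p.Prime ∧ Odd p ∧ CharP F p) :
    (Odd n →
      Module.finrank F (antiCentralizer F (MonoidAlgebra.of F (V8n n) (bV n))) = 4 * n - 2) ∧
    (Even n →
      Module.finrank F (antiCentralizer F (MonoidAlgebra.of F (V8n n) (bV n))) = 4 * n - 4) ∧
    LinearIndependent F ((↑) : antiCentralizerBasisB n F → MonoidAlgebra F (V8n n)) ∧
    Submodule.span F (antiCentralizerBasisB n F) =
      antiCentralizer F (MonoidAlgebra.of F (V8n n) (bV n)) := by
  have h2 := V8nAux.two_ne F hchar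
  have hcard : Module.finrank F (antiCentralizer F (MonoidAlgebra.of F (V8n n) (bV n))) =
      4 * ((n - 1) / 2) + 2 * n := by
    rw [← V8nAux.fam_span n hn F h2, finrank_span_eq_card (V8nAux.fam_indep n hn F),
      V8nAux.card_Idx]
  refine ⟨?_, ?_, ?_, ?_⟩
  · rintro ⟨k, rfl⟩
    rw [hcard]
    omega
  · rintro ⟨k, rfl⟩
    rw [hcard]
    omega
  · rw [← V8nAux.range_fam n hn F]
    exact (V8nAux.fam_indep n hn F).linearIndepOn_id
  · rw [← V8nAux.range_fam n hn F]
    exact V8nAux.fam_span n hn F h2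
end

section
/- Let n be a positive integer and let F be a field whose characteristic is 0 or an odd rational prime p. Then the anti-centralizer C̄(a^{-1}b) of the element a^{-1}b in the group algebra F V_{8n} is an F-subspace of dimension 4n−2 if n is odd, and 4n−4 if n is even; moreover the set {(a^{2k} − a^{−2k}), (a^{2k} − a^{−2k})b^2, (a^{2k−1} − a^{−(2k+1)})b, (a^{2k−1} − a^{−(2k+1)})b^3 : 1 ≤ k ≤ ⌊(n−1)/2⌋} ∪ {(a^{2k−1} − a^{−(2k−1)}b^2), (a^{2k−2} − a^{−2k}b^2)b : 1 ≤ k ≤ n} is a basis of C̄(a^{-1}b) over F. -/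
/-- The claimed basis of the anti-centralizer `C̄(a⁻¹b)` in `F V_{8n}`:
`{(a^{2k} − a^{−2k}), (a^{2k} − a^{−2k})b², (a^{2k−1} − a^{−(2k+1)})b,
  (a^{2k−1} − a^{−(2k+1)})b³ : 1 ≤ k ≤ ⌊(n−1)/2⌋}
  ∪ {(a^{2k−1} − a^{−(2k−1)}b²), (a^{2k−2} − a^{−2k}b²)b : 1 ≤ k ≤ n}`. -/
def antiCentralizerBasisAinvB (n : ℕ) (F : Type*) [Field F] :
    Set (MonoidAlgebra F (V8n n)) :=
  let a := aV n
  let b := bV n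
  let σ := MonoidAlgebra.of F (V8n n)
  {x | ∃ k : ℕ, 1 ≤ k ∧ k ≤ (n - 1) / 2 ∧
      (x = σ (a ^ (2 * k)) - σ (a⁻¹ ^ (2 * k)) ∨
       x = (σ (a ^ (2 * k)) - σ (a⁻¹ ^ (2 * k))) * σ b ^ 2 ∨
       x = (σ (a ^ (2 * k - 1)) - σ (a⁻¹ ^ (2 * k + 1))) * σ b ∨
       x = (σ (a ^ (2 * k - 1)) - σ (a⁻¹ ^ (2 * k + 1))) * σ b ^ 3)} ∪
  {x | ∃ k : ℕ, 1 ≤ k ∧ k ≤ n ∧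
      (x = σ (a ^ (2 * k - 1)) - σ (a⁻¹ ^ (2 * k - 1) * b ^ 2) ∨
       x = (σ (a ^ (2 * k - 2)) - σ (a⁻¹ ^ (2 * k) * b ^ 2)) * σ b)}

section Linear
open MonoidAlgebra

lemma mem_antiCentralizer_iff {F G : Type*} [Field F] [Group G] (g : G)
    (α : MonoidAlgebra F G) :
    α ∈ antiCentralizer F (MonoidAlgebra.of F G g) ↔
      ∀ x, α.coeff x = - α.coeff (g⁻¹ * x * g) := by
  have h0 : α ∈ antiCentralizer F (MonoidAlgebra.of F G g) ↔
      α * MonoidAlgebra.of F G g = -(MonoidAlgebra.of F G g * α) := Iff.rfl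
  rw [h0]
  constructor
  · intro h x
    have := congrArg (fun β => β.coeff (x * g)) h
    simpa [MonoidAlgebra.of_apply, mul_assoc] using this
  · intro h
    ext x
    have := h (x * g⁻¹)
    simpa [MonoidAlgebra.of_apply, mul_assoc] using this

/-- The basis vectors attached to representatives of the free orbits of an involution. -/
noncomputable def orbVec (F : Type*) {G ι : Type*} [Field F] [Group G] (g : G) (p : ι → G) (i : ι) :
    MonoidAlgebra F G :=
  MonoidAlgebra.of F G (p i) - MonoidAlgebra.of F G (g⁻¹ * p i * g)

lemma orb_basis {F G ι : Type*} [Field F] [Group G] [Fintype ι] (h2 : (2 : F) ≠ 0)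
    (g : G) (hg : g * g = 1) (p : ι → G) (hp : Function.Injective p)
    (hd : ∀ i j, p i ≠ g⁻¹ * p j * g)
    (hc : ∀ x, g⁻¹ * x * g ≠ x → ∃ i, x = p i ∨ x = g⁻¹ * p i * g) :
    LinearIndependent F (orbVec F g p) ∧
    Submodule.span F (Set.range (orbVec F g p)) = antiCentralizer F (MonoidAlgebra.of F G g) := by
  classical
  have hgi : g⁻¹ = g := inv_eq_of_mul_eq_one_left hg
  have hτ : ∀ x : G, g⁻¹ * (g⁻¹ * x * g) * g = x := by
    intro x
    calc g⁻¹ * (g⁻¹ * x * g) * g = (g⁻¹ * g⁻¹) * x * (g * g) := by group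
      _ = x := by rw [hgi, hg]; simp
  have hτi : ∀ x y : G, g⁻¹ * x * g = g⁻¹ * y * g ↔ x = y := by
    intro x y; simp
  have ev1 : ∀ (c : ι → F) j, (∑ i, c i • orbVec F g p i).coeff (p j) = c j := by
    intro c j
    have : ∀ i, (c i • orbVec F g p i).coeff (p j) = if i = j then c i else 0 := by
      intro i
      simp [orbVec, MonoidAlgebra.of_apply, Finsupp.single_apply, hp.eq_iff, (hd j i).symm]
    simp only [MonoidAlgebra.coeff_sum, Finsupp.finsetSum_apply, this]
    simp
  have ev2 : ∀ (c : ι → F) j, (∑ i, c i • orbVec F g p i).coeff (g⁻¹ * p j * g) = - c j := by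
    intro c j
    have : ∀ i, (c i • orbVec F g p i).coeff (g⁻¹ * p j * g) = if i = j then -c i else 0 := by
      intro i
      simp [orbVec, MonoidAlgebra.of_apply, Finsupp.single_apply, hp.eq_iff, (hd i j)]
      split_ifs <;> simp
    simp only [MonoidAlgebra.coeff_sum, Finsupp.finsetSum_apply, this]
    simp
  have ev3 : ∀ (c : ι → F) x, g⁻¹ * x * g = x → (∑ i, c i • orbVec F g p i).coeff x = 0 := by
    intro c x hx
    have : ∀ i, (c i • orbVec F g p i).coeff x = 0 := by
      intro i
      have a1 : p i ≠ x := by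
        rintro rfl; exact hd i i hx.symm
      have a2 : g⁻¹ * p i * g ≠ x := by
        rintro h
        rw [← h, hτ] at hx
        exact hd i i hx
      simp [orbVec, MonoidAlgebra.of_apply, Finsupp.single_apply, a1, a2]
    simp only [MonoidAlgebra.coeff_sum, Finsupp.finsetSum_apply, this]
    simp
  constructor
  · rw [Fintype.linearIndependent_iff]
    intro c hc0 j
    rw [← ev1 c j, hc0]; simp
  · apply le_antisymm
    · rw [Submodule.span_le]
      rintro _ ⟨i, rfl⟩
      refine (mem_antiCentralizer_iff g _).2 fun x => ?_
      have e1 : (g⁻¹ * p i * g = x) ↔ (p i = g⁻¹ * x * g) := by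
        rw [← hτi, hτ]
      simp only [orbVec, MonoidAlgebra.of_apply, MonoidAlgebra.coeff_sub, MonoidAlgebra.coeff_single,
        Finsupp.sub_apply, Finsupp.single_apply, hτi, e1]
      ring
    · intro α hα
      rw [mem_antiCentralizer_iff] at hα
      have : α = ∑ i, α.coeff (p i) • orbVec F g p i := by
        ext x
        by_cases hx : g⁻¹ * x * g = x
        · rw [ev3 _ x hx]
          have := hα x
          rw [hx] at this
          have h3 : 2 * α.coeff x = 0 := by linear_combination this
          simpa [h2] using h3
        · obtain ⟨i, rfl | rfl⟩ := hc x hx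
          · rw [ev1]
          · rw [ev2]
            have := hα (p i)
            rw [this, neg_neg]
      rw [this]
      exact Submodule.sum_mem _ fun i _ => Submodule.smul_mem _ _ (Submodule.subset_span ⟨i, rfl⟩)

end Linear
section Grp

/-- The homomorphism `ZMod (2n) → ZMod 4`, `i ↦ 2i`. -/
def sHom (n : ℕ) : ZMod (2 * n) →+ ZMod 4 :=
  ZMod.lift (2 * n) ⟨(zmultiplesHom (ZMod 4)) 2, by
    simp only [zmultiplesHom_apply, zsmul_eq_mul]
    push_cast
    have : (2 * (n : ZMod 4) * 2) = 4 * n := by ring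
    rw [this, show (4 : ZMod 4) = 0 from rfl, zero_mul]⟩

lemma sHom_int (n : ℕ) (k : ℤ) : sHom n (k : ZMod (2 * n)) = ((2 * k : ℤ) : ZMod 4) := by
  unfold sHom
  rw [ZMod.lift_coe]
  simp [mul_comm]

lemma sHom_one (n : ℕ) : sHom n 1 = 2 := by
  have := sHom_int n 1
  simpa using this

lemma sHom_cases (n : ℕ) (i : ZMod (2 * n)) : sHom n i = 0 ∨ sHom n i = 2 := by
  obtain ⟨k, rfl⟩ := ZMod.intCast_surjective i
  rw [sHom_int]
  push_cast
  generalize (k : ZMod 4) = y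
  revert y
  decide

/-- Left multiplication by `a` on normal forms. -/
def permA (n : ℕ) : Equiv.Perm (ZMod (2 * n) × ZMod 4) where
  toFun x := (x.1 + 1, x.2)
  invFun x := (x.1 - 1, x.2)
  left_inv x := by simp
  right_inv x := by simp

/-- Left multiplication by `b` on normal forms. -/
def permB (n : ℕ) : Equiv.Perm (ZMod (2 * n) × ZMod 4) where
  toFun x := (-x.1, x.2 + 1 + sHom n x.1)
  invFun x := (-x.1, x.2 - 1 + sHom n x.1)
  left_inv x := by
    rcases sHom_cases n x.1 with h | h <;> ext <;> simp [h] <;> grind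
  right_inv x := by
    rcases sHom_cases n x.1 with h | h <;> ext <;> simp [h] <;> grind

lemma permA_apply (n : ℕ) (i j) : permA n (i, j) = (i + 1, j) := rfl
lemma permB_apply (n : ℕ) (i j) : permB n (i, j) = (-i, j + 1 + sHom n i) := rfl
lemma permB_symm_apply (n : ℕ) (i j) : (permB n)⁻¹ (i, j) = (-i, j - 1 + sHom n i) := rfl

lemma permA_pow (n : ℕ) (k : ℕ) (i j) : (permA n ^ k) (i, j) = (i + k, j) := by
  induction k with
  | zero => simp
  | succ k ih =>
    rw [pow_succ', Equiv.Perm.mul_apply, ih, permA_apply]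
    push_cast
    rw [add_assoc]

/-- The action of `V_{8n}` on normal forms. -/
def actV (n : ℕ) : V8n n →* Equiv.Perm (ZMod (2 * n) × ZMod 4) :=
  PresentedGroup.toGroup (f := ![permA n, permB n]) (by
    intro r hr
    simp only [V8nRels, Set.mem_insert_iff, Set.mem_singleton_iff] at hr
    rcases hr with rfl | rfl | rfl | rfl
    · ext1 ⟨i, j⟩
      simp only [map_pow, FreeGroup.lift_apply_of]
      simp only [Matrix.cons_val_zero]
      rw [permA_pow]
      have := ZMod.natCast_self (2 * n)
      simp [this]
    · ext1 ⟨i, j⟩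
      simp only [map_pow, FreeGroup.lift_apply_of, Matrix.cons_val_one]
      simp only [pow_succ, pow_zero, one_mul, Equiv.Perm.mul_apply, Matrix.cons_val_zero,
        permB_apply, Equiv.Perm.one_apply, map_neg, neg_neg]
      rcases sHom_cases n i with h | h <;> ext <;> simp [h] <;> grind
    · ext1 ⟨i, j⟩
      simp only [map_pow, map_mul, FreeGroup.lift_apply_of, Matrix.cons_val_one]
      simp only [pow_succ, pow_zero, one_mul, Equiv.Perm.mul_apply, Matrix.cons_val_zero,
        permB_apply, permA_apply, Equiv.Perm.one_apply, map_neg, neg_neg, map_add, sHom_one]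
      rcases sHom_cases n i with h | h <;> ext <;> simp [h] <;> grind
    · ext1 ⟨i, j⟩
      simp only [map_pow, map_mul, map_inv, FreeGroup.lift_apply_of, Matrix.cons_val_one]
      simp only [pow_succ, pow_zero, one_mul, Equiv.Perm.mul_apply, Matrix.cons_val_zero,
        permB_symm_apply, permA_apply, Equiv.Perm.one_apply, map_neg, neg_neg, map_add, sHom_one]
      rcases sHom_cases n i with h | h <;> ext <;> simp [h] <;> grind)

lemma actV_a (n : ℕ) : actV n (aV n) = permA n := by
  simp [actV, aV]
lemma actV_b (n : ℕ) : actV n (bV n) = permB n := by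
  simp [actV, bV]

lemma aV_pow (n : ℕ) : aV n ^ (2 * n) = 1 :=
  PresentedGroup.one_of_mem (rels := V8nRels n) (x := FreeGroup.of 0 ^ (2 * n)) (by simp [V8nRels])
lemma bV_pow (n : ℕ) : bV n ^ 4 = 1 :=
  PresentedGroup.one_of_mem (rels := V8nRels n) (x := FreeGroup.of 1 ^ 4) (by simp [V8nRels])
lemma ba_pow (n : ℕ) : (bV n * aV n) ^ 2 = 1 :=
  PresentedGroup.one_of_mem (rels := V8nRels n) (x := (FreeGroup.of 1 * FreeGroup.of 0) ^ 2)
    (by simp [V8nRels])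
lemma bia_pow (n : ℕ) : ((bV n)⁻¹ * aV n) ^ 2 = 1 :=
  PresentedGroup.one_of_mem (rels := V8nRels n) (x := ((FreeGroup.of 1)⁻¹ * FreeGroup.of 0) ^ 2)
    (by simp [V8nRels])

lemma bab (n : ℕ) : bV n * aV n * bV n = (aV n)⁻¹ := by
  have h := ba_pow n
  rw [pow_two] at h
  rw [eq_inv_iff_mul_eq_one]
  simpa [mul_assoc] using h

lemma biabi (n : ℕ) : (bV n)⁻¹ * aV n * (bV n)⁻¹ = (aV n)⁻¹ := by
  have h := bia_pow n
  rw [pow_two] at h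
  rw [eq_inv_iff_mul_eq_one]
  simpa [mul_assoc] using h

lemma b2_inv (n : ℕ) : (bV n ^ 2)⁻¹ = bV n ^ 2 := by
  rw [inv_eq_iff_mul_eq_one, ← pow_add]; exact bV_pow n

lemma comm_a_b2 (n : ℕ) : Commute (aV n) (bV n ^ 2) := by
  have h : bV n ^ 2 * aV n * bV n ^ 2 = aV n := by
    calc bV n ^ 2 * aV n * bV n ^ 2 = bV n * (bV n * aV n * bV n) * bV n := by
          simp only [pow_two, mul_assoc]
      _ = bV n * ((bV n)⁻¹ * aV n * (bV n)⁻¹) * bV n := by rw [bab, biabi]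
      _ = aV n := by group
  have h2 : aV n * (bV n ^ 2)⁻¹ = bV n ^ 2 * aV n := by
    rw [mul_inv_eq_iff_eq_mul]; exact h.symm
  rw [b2_inv] at h2
  exact h2

lemma bab_inv (n : ℕ) : bV n * aV n * (bV n)⁻¹ = (aV n)⁻¹ * bV n ^ 2 := by
  calc bV n * aV n * (bV n)⁻¹ = bV n * aV n * bV n * (bV n ^ 2)⁻¹ := by group
    _ = _ := by rw [bab, b2_inv]

lemma b_mul_a_zpow (n : ℕ) (k : ℤ) :
    bV n * aV n ^ k = aV n ^ (-k) * bV n ^ (2 * k + 1) := by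
  have h := conj_zpow (i := k) (a := bV n) (b := aV n)
  rw [bab_inv, (comm_a_b2 n).inv_left.mul_zpow, eq_mul_inv_iff_mul_eq] at h
  rw [← h, zpow_add, zpow_mul, zpow_one, inv_zpow', mul_assoc]
  rfl

/-- Normal forms. -/
def nf (n : ℕ) (x : ZMod (2 * n) × ZMod 4) : V8n n := aV n ^ x.1.val * bV n ^ x.2.val

lemma nf_int (n : ℕ) [NeZero n] (k l : ℤ) :
    nf n ((k : ZMod (2 * n)), (l : ZMod 4)) = aV n ^ k * bV n ^ l := by
  have h1 : aV n ^ ((k : ZMod (2 * n)).val) = aV n ^ k := by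
    rw [← zpow_natCast, ZMod.val_intCast]
    exact (zpow_eq_zpow_emod k (n := ((2 * n : ℕ) : ℤ)) (by exact_mod_cast aV_pow n)).symm
  have h2 : bV n ^ ((l : ZMod 4).val) = bV n ^ l := by
    rw [← zpow_natCast, ZMod.val_intCast]
    exact (zpow_eq_zpow_emod l (n := ((4 : ℕ) : ℤ)) (by exact_mod_cast bV_pow n)).symm
  simp only [nf, h1, h2]

lemma nf_a (n : ℕ) [NeZero n] (x) : aV n * nf n x = nf n (permA n x) := by
  obtain ⟨i, j⟩ := x
  obtain ⟨k, rfl⟩ := ZMod.intCast_surjective i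
  obtain ⟨l, rfl⟩ := ZMod.intCast_surjective j
  rw [permA_apply]
  have := nf_int n (k + 1) l
  push_cast at this
  rw [this, nf_int, ← mul_assoc, add_comm, zpow_one_add]

lemma nf_b (n : ℕ) [NeZero n] (x) : bV n * nf n x = nf n (permB n x) := by
  obtain ⟨i, j⟩ := x
  obtain ⟨k, rfl⟩ := ZMod.intCast_surjective i
  obtain ⟨l, rfl⟩ := ZMod.intCast_surjective j
  rw [permB_apply, sHom_int]
  have := nf_int n (-k) (l + 1 + 2 * k)
  push_cast at this ⊢
  rw [this, nf_int, ← mul_assoc, b_mul_a_zpow, mul_assoc, ← zpow_add]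
  congr 2
  ring

lemma nf_act (n : ℕ) [NeZero n] (v : V8n n) : ∀ x, v * nf n x = nf n (actV n v x) := by
  let H : Subgroup (V8n n) :=
    { carrier := {v | ∀ x, v * nf n x = nf n (actV n v x)}
      one_mem' := by intro x; simp
      mul_mem' := by
        intro u v hu hv x
        rw [mul_assoc, hv, hu, map_mul, Equiv.Perm.mul_apply]
      inv_mem' := by
        intro v hv x
        rw [inv_mul_eq_iff_eq_mul, hv, ← Equiv.Perm.mul_apply, ← map_mul]
        simp }
  have : v ∈ H := by
    refine PresentedGroup.generated_by (V8nRels n) H ?_ v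
    intro j x
    fin_cases j
    · have := nf_a n x
      rw [← actV_a] at this
      exact this
    · have := nf_b n x
      rw [← actV_b] at this
      exact this
  exact this

/-- Evaluation at the base point. -/
def evV (n : ℕ) (v : V8n n) : ZMod (2 * n) × ZMod 4 := actV n v (0, 0)

lemma permB_zpow_base (n : ℕ) (j : ZMod 4) : (permB n ^ j.val) (0, 0) = (0, j) := by
  have h : j = 0 ∨ j = 1 ∨ j = 2 ∨ j = 3 := by revert j; decide
  rcases h with rfl | rfl | rfl | rfl
  · rfl
  · rw [show (1 : ZMod 4).val = 1 from rfl]; simp [permB_apply]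
  · rw [show (2 : ZMod 4).val = 2 from rfl]; simp [permB_apply, pow_succ]; rfl
  · rw [show (3 : ZMod 4).val = 3 from rfl]; simp [permB_apply, pow_succ]; rfl

lemma evV_nf (n : ℕ) [NeZero n] (x) : evV n (nf n x) = x := by
  obtain ⟨i, j⟩ := x
  simp only [evV, nf, map_mul, map_pow, actV_a, actV_b, Equiv.Perm.mul_apply]
  rw [permB_zpow_base, permA_pow]
  simp

lemma nf_evV (n : ℕ) [NeZero n] (v) : nf n (evV n v) = v := by
  rw [evV, ← nf_act]
  simp [nf]

lemma nf_inj (n : ℕ) [NeZero n] : Function.Injective (nf n) :=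
  Function.LeftInverse.injective (evV_nf n)
lemma evV_inj (n : ℕ) [NeZero n] : Function.Injective (evV n) :=
  Function.LeftInverse.injective (nf_evV n)

/-- The element `a⁻¹b`. -/
def gV (n : ℕ) : V8n n := (aV n)⁻¹ * bV n

lemma gV_sq (n : ℕ) : gV n * gV n = 1 := by
  have h := bab_inv n
  have : bV n * (aV n)⁻¹ * bV n = aV n := by
    have h1 := biabi n
    rw [← inv_inj] at h1
    simpa [mul_assoc] using h1
  calc gV n * gV n = (aV n)⁻¹ * (bV n * (aV n)⁻¹ * bV n) := by simp only [gV, mul_assoc]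
    _ = 1 := by rw [this]; simp

/-- Conjugation by `a⁻¹b` on normal forms. -/
def tauX (n : ℕ) (x : ZMod (2 * n) × ZMod 4) : ZMod (2 * n) × ZMod 4 :=
  if x.2 = 0 ∨ x.2 = 2 then (-x.1, x.2 + sHom n x.1) else (-x.1 - 2, x.2 + 2 + sHom n x.1)

lemma permA_inv_apply (n : ℕ) (i j) : (permA n)⁻¹ (i, j) = (i - 1, j) := rfl

lemma sHom_two (n : ℕ) : sHom n 2 = 0 := by
  have := sHom_int n 2
  push_cast at this
  rw [this]; rfl

lemma permB_base' (n : ℕ) (j : ZMod 4) : (permB n ^ j.val) (-1, 1) =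
    (if j = 0 ∨ j = 2 then -1 else 1, if j = 0 ∨ j = 2 then j + 1 else j - 1) := by
  have h : j = 0 ∨ j = 1 ∨ j = 2 ∨ j = 3 := by revert j; decide
  rcases h with rfl | rfl | rfl | rfl
  · rw [show (0 : ZMod 4).val = 0 from rfl, pow_zero]; rfl
  · rw [show (1 : ZMod 4).val = 1 from rfl]
    simp only [pow_succ, pow_zero, one_mul, Equiv.Perm.mul_apply, permB_apply, map_neg, neg_neg,
      sHom_one]
    rfl
  · rw [show (2 : ZMod 4).val = 2 from rfl]
    simp only [pow_succ, pow_zero, one_mul, Equiv.Perm.mul_apply, permB_apply, map_neg, neg_neg,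
      sHom_one]
    rfl
  · rw [show (3 : ZMod 4).val = 3 from rfl]
    simp only [pow_succ, pow_zero, one_mul, Equiv.Perm.mul_apply, permB_apply, map_neg, neg_neg,
      sHom_one]
    rfl

lemma conj_nf (n : ℕ) [NeZero n] (x) : (gV n)⁻¹ * nf n x * gV n = nf n (tauX n x) := by
  rw [mul_assoc, inv_mul_eq_iff_eq_mul]
  apply evV_inj n
  obtain ⟨i, j⟩ := x
  have h1 : ∀ y, evV n (gV n * nf n y) = (-y.1 - 1, y.2 + 1 + sHom n y.1) := by
    intro y
    have := evV_nf n y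
    rw [evV] at this
    simp only [evV, map_mul, Equiv.Perm.mul_apply]
    rw [this, gV]
    simp only [map_mul, map_inv, actV_a, actV_b, Equiv.Perm.mul_apply]
    rfl
  rw [h1]
  simp only [evV, nf, gV, map_mul, map_inv, map_pow, actV_a, actV_b, Equiv.Perm.mul_apply]
  have hb : (permA n)⁻¹ (permB n (0, 0)) = (-1, 1) := by
    simp [permB_apply, permA_inv_apply]
  rw [hb]
  have hc := sHom_cases n i
  have h : j = 0 ∨ j = 1 ∨ j = 2 ∨ j = 3 := by revert j; decide
  rcases h with rfl | rfl | rfl | rfl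
  · rw [permB_base' n 0, permA_pow]
    simp only [tauX, true_or, if_true, map_neg, ZMod.natCast_val, ZMod.cast_id', id]
    refine Prod.ext (by simp; ring) ?_
    rcases hc with h | h <;> rw [h] <;> rfl
  · rw [permB_base' n 1, permA_pow]
    rw [if_neg (by decide)]
    simp only [tauX, if_neg (show ¬ ((1 : ZMod 4) = 0 ∨ (1 : ZMod 4) = 2) by decide), map_neg,
      map_sub, sHom_two, ZMod.natCast_val, ZMod.cast_id', id]
    refine Prod.ext (by simp; ring) ?_
    rcases hc with h | h <;> rw [h] <;> rfl
  · rw [permB_base' n 2, permA_pow]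
    simp only [tauX, or_true, if_true, map_neg, ZMod.natCast_val, ZMod.cast_id', id]
    refine Prod.ext (by simp; ring) ?_
    rcases hc with h | h <;> rw [h] <;> rfl
  · rw [permB_base' n 3, permA_pow]
    rw [if_neg (by decide)]
    simp only [tauX, if_neg (show ¬ ((3 : ZMod 4) = 0 ∨ (3 : ZMod 4) = 2) by decide), map_neg,
      map_sub, sHom_two, ZMod.natCast_val, ZMod.cast_id', id]
    refine Prod.ext (by simp; ring) ?_
    rcases hc with h | h <;> rw [h] <;> rfl

end Grp

section Comb

/-- Index set of the claimed basis. -/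
abbrev Idx (n : ℕ) : Type := (Fin ((n - 1) / 2) × Fin 4) ⊕ (Fin n × Fin 2)

/-- Exponents of the chosen representatives. -/
def wI (n : ℕ) : Idx n → ℕ × ZMod 4
  | .inl (k, 0) => (2 * k + 2, 0)
  | .inl (k, 1) => (2 * k + 1, 1)
  | .inl (k, 2) => (2 * k + 2, 2)
  | .inl (k, 3) => (2 * k + 1, 3)
  | .inr (k, 0) => (2 * k + 1, 0)
  | .inr (k, 1) => (2 * k, 1)

/-- Characterization of the exponents of representatives. -/
def QI (n m : ℕ) (j : ZMod 4) : Prop :=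
  (j = 0 ∧ (m % 2 = 1 ∨ 0 < m ∧ m < n)) ∨ (j = 2 ∧ m % 2 = 0 ∧ 0 < m ∧ m < n) ∨
  (j = 1 ∧ (m % 2 = 0 ∨ m + 1 < n)) ∨ (j = 3 ∧ m % 2 = 1 ∧ m + 1 < n)

lemma wI_lt (n : ℕ) (i : Idx n) : (wI n i).1 < 2 * n := by
  rcases i with ⟨k, j⟩ | ⟨k, j⟩ <;> have := k.2 <;> fin_cases j <;> simp only [wI] <;> grind

lemma wI_Q (n : ℕ) (i : Idx n) : QI n (wI n i).1 (wI n i).2 := by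
  rcases i with ⟨k, j⟩ | ⟨k, j⟩ <;> have := k.2 <;> fin_cases j
  · left; exact ⟨rfl, by simp only [wI]; omega⟩
  · right; right; left; exact ⟨rfl, by simp only [wI]; omega⟩
  · right; left; exact ⟨rfl, by simp only [wI]; omega⟩
  · right; right; right; exact ⟨rfl, by simp only [wI]; omega⟩
  · left; exact ⟨rfl, by simp only [wI]; omega⟩
  · right; right; left; exact ⟨rfl, by simp only [wI]; omega⟩

lemma exists_wI (n m : ℕ) (j : ZMod 4) (hm : m < 2 * n) (h : QI n m j) :
    ∃ i, wI n i = (m, j) := by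
  rcases h with ⟨rfl, h⟩ | ⟨rfl, h⟩ | ⟨rfl, h⟩ | ⟨rfl, h⟩
  · by_cases h2 : m % 2 = 1
    · refine ⟨.inr (⟨m / 2, by omega⟩, 0), Prod.ext ?_ rfl⟩
      simp only [wI]; omega
    · refine ⟨.inl (⟨m / 2 - 1, by omega⟩, 0), Prod.ext ?_ rfl⟩
      simp only [wI]; omega
  · refine ⟨.inl (⟨m / 2 - 1, by omega⟩, 2), Prod.ext ?_ rfl⟩
    simp only [wI]; omega
  · by_cases h2 : m % 2 = 0
    · refine ⟨.inr (⟨m / 2, by omega⟩, 1), Prod.ext ?_ rfl⟩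
      simp only [wI]; omega
    · refine ⟨.inl (⟨m / 2, by omega⟩, 1), Prod.ext ?_ rfl⟩
      simp only [wI]; omega
  · refine ⟨.inl (⟨m / 2, by omega⟩, 3), Prod.ext ?_ rfl⟩
    simp only [wI]; omega

lemma wI_inj (n : ℕ) : Function.Injective (wI n) := by
  have e01 : (0 : ZMod 4) ≠ 1 := by decide
  have e02 : (0 : ZMod 4) ≠ 2 := by decide
  have e03 : (0 : ZMod 4) ≠ 3 := by decide
  have e12 : (1 : ZMod 4) ≠ 2 := by decide
  have e13 : (1 : ZMod 4) ≠ 3 := by decide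
  have e23 : (2 : ZMod 4) ≠ 3 := by decide
  rintro (⟨⟨k, hk⟩, j⟩ | ⟨⟨k, hk⟩, j⟩) (⟨⟨k', hk'⟩, j'⟩ | ⟨⟨k', hk'⟩, j'⟩) h <;>
    fin_cases j <;> fin_cases j' <;>
    simp only [wI, Prod.mk.injEq, e01, e02, e03, e12, e13, e23, e01.symm, e02.symm, e03.symm,
      e12.symm, e13.symm, e23.symm, and_false, and_true, reduceCtorEq, Sum.inl.injEq,
      Sum.inr.injEq, Fin.mk.injEq] at h ⊢ <;> omega

/-- The representatives as normal forms. -/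
def pX (n : ℕ) (i : Idx n) : ZMod (2 * n) × ZMod 4 := (((wI n i).1 : ZMod (2 * n)), (wI n i).2)

lemma pX_val (n : ℕ) (i : Idx n) : (pX n i).1.val = (wI n i).1 :=
  ZMod.val_cast_of_lt (wI_lt n i)

lemma pX_inj (n : ℕ) : Function.Injective (pX n) := by
  intro i i' h
  apply wI_inj n
  refine Prod.ext ?_ (show (pX n i).2 = (pX n i').2 by rw [h])
  rw [← pX_val, ← pX_val, h]

lemma pX_Q (n : ℕ) (i : Idx n) : QI n (pX n i).1.val (pX n i).2 := by
  rw [pX_val]; exact wI_Q n i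

lemma exists_pX (n : ℕ) [NeZero n] (x : ZMod (2 * n) × ZMod 4) (h : QI n x.1.val x.2) :
    ∃ i, pX n i = x := by
  obtain ⟨i, hi⟩ := exists_wI n x.1.val x.2 (ZMod.val_lt _) h
  refine ⟨i, Prod.ext ?_ ?_⟩
  · simp [pX, hi]
  · simp [pX, hi]

lemma sHom_val (n : ℕ) [NeZero n] (i : ZMod (2 * n)) :
    sHom n i = if i.val % 2 = 0 then 0 else 2 := by
  have h : sHom n i = ((2 * (i.val : ℤ) : ℤ) : ZMod 4) := by
    rw [← sHom_int n]; simp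
  rw [h]
  rcases Nat.even_or_odd' i.val with ⟨c, hc | hc⟩
  · rw [if_pos (by omega), hc]
    push_cast
    have : (2 * (2 * c) : ZMod 4) = 4 * c := by ring
    rw [this, show (4 : ZMod 4) = 0 from rfl, zero_mul]
  · rw [if_neg (by omega), hc]
    push_cast
    have : (2 * (2 * c + 1) : ZMod 4) = 4 * c + 2 := by ring
    rw [this, show (4 : ZMod 4) = 0 from rfl, zero_mul, zero_add]

lemma dvd_small {n m : ℕ} (h : 2 * n ∣ m) (hm : m ≤ 4 * n) : m = 0 ∨ m = 2 * n ∨ m = 4 * n := by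
  obtain ⟨c, rfl⟩ := h
  rcases Nat.eq_zero_or_pos n with rfl | hn
  · simp
  have : c ≤ 2 := by
    by_contra hc
    have : 3 ≤ c := by omega
    nlinarith
  interval_cases c <;> omega

lemma tau_even (n : ℕ) [NeZero n] (x : ZMod (2 * n) × ZMod 4) (hj : x.2 = 0 ∨ x.2 = 2) :
    (x.1.val + (tauX n x).1.val = 0 ∨ x.1.val + (tauX n x).1.val = 2 * n) ∧
    (tauX n x).2 = if x.1.val % 2 = 0 then x.2 else x.2 + 2 := by
  have h1 := ZMod.val_lt x.1
  have h2 := ZMod.val_lt (tauX n x).1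
  constructor
  · have hd : 2 * n ∣ x.1.val + (tauX n x).1.val := by
      rw [← ZMod.natCast_eq_zero_iff]
      simp [tauX, hj]
    rcases dvd_small hd (by omega) with h | h | h <;> omega
  · simp only [tauX, hj, if_true, sHom_val]
    split_ifs <;> simp

lemma tau_odd (n : ℕ) [NeZero n] (x : ZMod (2 * n) × ZMod 4) (hj : ¬ (x.2 = 0 ∨ x.2 = 2)) :
    (x.1.val + (tauX n x).1.val + 2 = 2 * n ∨ x.1.val + (tauX n x).1.val + 2 = 4 * n) ∧
    (tauX n x).2 = if x.1.val % 2 = 0 then x.2 + 2 else x.2 := by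
  have h1 := ZMod.val_lt x.1
  have h2 := ZMod.val_lt (tauX n x).1
  constructor
  · have hd : 2 * n ∣ x.1.val + (tauX n x).1.val + 2 := by
      rw [← ZMod.natCast_eq_zero_iff]
      simp [tauX, hj]
      ring
    rcases dvd_small hd (by omega) with h | h | h <;> omega
  · simp only [tauX, hj, if_false, sHom_val]
    split_ifs
    · simp
    · rw [add_assoc, show (2 + 2 : ZMod 4) = 0 from rfl, add_zero]

lemma QI0 (n m : ℕ) : QI n m 0 ↔ (m % 2 = 1 ∨ 0 < m ∧ m < n) := by
  simp [QI, show (0 : ZMod 4) ≠ 1 by decide, show (0 : ZMod 4) ≠ 2 by decide, show (0 : ZMod 4) ≠ 3 by decide]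
lemma QI1 (n m : ℕ) : QI n m 1 ↔ (m % 2 = 0 ∨ m + 1 < n) := by
  simp [QI, show (1 : ZMod 4) ≠ 0 by decide, show (1 : ZMod 4) ≠ 2 by decide, show (1 : ZMod 4) ≠ 3 by decide]
lemma QI2 (n m : ℕ) : QI n m 2 ↔ (m % 2 = 0 ∧ 0 < m ∧ m < n) := by
  simp [QI, show (2 : ZMod 4) ≠ 0 by decide, show (2 : ZMod 4) ≠ 1 by decide,
    show (2 : ZMod 4) ≠ 3 by decide]
lemma QI3 (n m : ℕ) : QI n m 3 ↔ (m % 2 = 1 ∧ m + 1 < n) := by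
  simp [QI, show (3 : ZMod 4) ≠ 0 by decide, show (3 : ZMod 4) ≠ 1 by decide,
    show (3 : ZMod 4) ≠ 2 by decide]

lemma QI_tau (n : ℕ) [NeZero n] (x : ZMod (2 * n) × ZMod 4) :
    ¬ (QI n x.1.val x.2 ∧ QI n (tauX n x).1.val (tauX n x).2) ∧
    (tauX n x ≠ x → QI n x.1.val x.2 ∨ QI n (tauX n x).1.val (tauX n x).2) := by
  have h1 := ZMod.val_lt x.1
  have h2 := ZMod.val_lt (tauX n x).1
  have hne : tauX n x ≠ x → (tauX n x).1.val ≠ x.1.val ∨ (tauX n x).2 ≠ x.2 := by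
    intro h
    by_contra hc
    push Not at hc
    exact h (Prod.ext (ZMod.val_injective _ hc.1) hc.2)
  have a0 : (0 + 2 : ZMod 4) = 2 := rfl
  have a1 : (1 + 2 : ZMod 4) = 3 := rfl
  have a2 : (2 + 2 : ZMod 4) = 0 := rfl
  have a3 : (3 + 2 : ZMod 4) = 1 := rfl
  have hE := tau_even n x
  have hO := tau_odd n x
  generalize (tauX n x).1.val = m' at *
  generalize (tauX n x).2 = j' at *
  generalize tauX n x = y at *
  obtain ⟨i, j⟩ := x
  simp only at *
  generalize i.val = m at *
  have h : j = 0 ∨ j = 1 ∨ j = 2 ∨ j = 3 := by clear * - j; revert j; decide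
  rcases h with rfl | rfl | rfl | rfl
  · have hE := hE (by decide)
    rw [a0] at hE
    by_cases hm : m % 2 = 0
    · rw [if_pos hm] at hE
      obtain ⟨hE, rfl⟩ := hE
      simp only [ne_eq, not_true, or_false] at hne
      simp only [QI0]; constructor <;> grind
    · rw [if_neg hm] at hE
      obtain ⟨hE, rfl⟩ := hE
      simp only [QI0, QI2]; constructor <;> grind
  · have hE := hO (by decide)
    rw [a1] at hE
    by_cases hm : m % 2 = 0
    · rw [if_pos hm] at hE
      obtain ⟨hE, rfl⟩ := hE
      simp only [QI1, QI3]; constructor <;> grind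
    · rw [if_neg hm] at hE
      obtain ⟨hE, rfl⟩ := hE
      simp only [ne_eq, not_true, or_false] at hne
      simp only [QI1]; constructor <;> grind
  · have hE := hE (by decide)
    rw [a2] at hE
    by_cases hm : m % 2 = 0
    · rw [if_pos hm] at hE
      obtain ⟨hE, rfl⟩ := hE
      simp only [ne_eq, not_true, or_false] at hne
      simp only [QI2]; constructor <;> grind
    · rw [if_neg hm] at hE
      obtain ⟨hE, rfl⟩ := hE
      simp only [QI0, QI2]; constructor <;> grind
  · have hE := hO (by decide)
    rw [a3] at hE
    by_cases hm : m % 2 = 0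
    · rw [if_pos hm] at hE
      obtain ⟨hE, rfl⟩ := hE
      simp only [QI1, QI3]; constructor <;> grind
    · rw [if_neg hm] at hE
      obtain ⟨hE, rfl⟩ := hE
      simp only [ne_eq, not_true, or_false] at hne
      simp only [QI3]; constructor <;> grind

end Comb

section Final

lemma b_zpow_four (n : ℕ) (k r : ℤ) : bV n ^ (4 * k + r) = bV n ^ r := by
  rw [zpow_add, zpow_mul]
  have : bV n ^ (4 : ℤ) = 1 := by exact_mod_cast bV_pow n
  rw [this, one_zpow, one_mul]

/-- The antisymmetrized vector attached to a normal form. -/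
noncomputable def vX (n : ℕ) (F : Type*) [Field F] (x : ZMod (2 * n) × ZMod 4) :
    MonoidAlgebra F (V8n n) :=
  MonoidAlgebra.of F (V8n n) (nf n x) - MonoidAlgebra.of F (V8n n) (nf n (tauX n x))

lemma nf_tau_even (n : ℕ) [NeZero n] (m l r c : ℤ) (h : (l : ZMod 4) = 0 ∨ (l : ZMod 4) = 2)
    (hr : l + 2 * m = 4 * c + r) :
    nf n (tauX n ((m : ZMod (2 * n)), (l : ZMod 4))) = aV n ^ (-m) * bV n ^ r := by
  rw [← b_zpow_four n c r, ← hr, ← nf_int]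
  simp only [tauX, h, if_true, sHom_int]
  push_cast
  rfl

lemma nf_tau_odd (n : ℕ) [NeZero n] (m l r c : ℤ) (h : ¬ ((l : ZMod 4) = 0 ∨ (l : ZMod 4) = 2))
    (hr : l + 2 + 2 * m = 4 * c + r) :
    nf n (tauX n ((m : ZMod (2 * n)), (l : ZMod 4))) = aV n ^ (-m - 2) * bV n ^ r := by
  rw [← b_zpow_four n c r, ← hr, ← nf_int]
  simp only [tauX, h, if_false, sHom_int]
  push_cast
  rfl

lemma pow_eq_z {G : Type*} [Group G] (g : G) (m : ℕ) (z : ℤ) (h : (m : ℤ) = z) : g ^ m = g ^ z := by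
  rw [← h, zpow_natCast]

lemma ipow_eq_z {G : Type*} [Group G] (g : G) (m : ℕ) (z : ℤ) (h : -(m : ℤ) = z) :
    g⁻¹ ^ m = g ^ z := by
  rw [← h, zpow_neg, zpow_natCast, inv_pow]

variable (n : ℕ) [NeZero n] (F : Type*) [Field F]

lemma K1 (k : ℕ) : MonoidAlgebra.of F (V8n n) (aV n ^ (2 * (k + 1))) -
    MonoidAlgebra.of F (V8n n) ((aV n)⁻¹ ^ (2 * (k + 1))) =
    vX n F (((2 * k + 2 : ℕ) : ZMod (2 * n)), 0) := by
  have h1 := nf_int n (2 * k + 2) 0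
  have h2 := nf_tau_even n (2 * k + 2) 0 0 (k + 1) (by simp) (by ring)
  push_cast at h1 h2
  unfold vX
  push_cast
  rw [h1, h2, pow_eq_z (aV n) (2 * (k + 1)) (2 * k + 2) (by omega),
    ipow_eq_z (aV n) (2 * (k + 1)) (-(2 * k + 2)) (by omega)]
  simp only [sub_mul, ← map_pow, ← map_mul, zpow_ofNat, pow_zero, pow_one, mul_one, mul_assoc]

lemma K2 (k : ℕ) : (MonoidAlgebra.of F (V8n n) (aV n ^ (2 * (k + 1))) -
    MonoidAlgebra.of F (V8n n) ((aV n)⁻¹ ^ (2 * (k + 1)))) *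
      MonoidAlgebra.of F (V8n n) (bV n) ^ 2 =
    vX n F (((2 * k + 2 : ℕ) : ZMod (2 * n)), 2) := by
  have h1 := nf_int n (2 * k + 2) 2
  have h2 := nf_tau_even n (2 * k + 2) 2 2 (k + 1) (by simp) (by ring)
  push_cast at h1 h2
  unfold vX
  push_cast
  rw [h1, h2, pow_eq_z (aV n) (2 * (k + 1)) (2 * k + 2) (by omega),
    ipow_eq_z (aV n) (2 * (k + 1)) (-(2 * k + 2)) (by omega)]
  simp only [sub_mul, ← map_pow, ← map_mul, zpow_ofNat, pow_zero, pow_one, mul_one, mul_assoc]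

lemma K3 (k : ℕ) : (MonoidAlgebra.of F (V8n n) (aV n ^ (2 * (k + 1) - 1)) -
    MonoidAlgebra.of F (V8n n) ((aV n)⁻¹ ^ (2 * (k + 1) + 1))) *
      MonoidAlgebra.of F (V8n n) (bV n) =
    vX n F (((2 * k + 1 : ℕ) : ZMod (2 * n)), 1) := by
  have h1 := nf_int n (2 * k + 1) 1
  have h2 := nf_tau_odd n (2 * k + 1) 1 1 (k + 1) (by decide) (by ring)
  push_cast at h1 h2
  unfold vX
  push_cast
  rw [h1, h2, pow_eq_z (aV n) (2 * (k + 1) - 1) (2 * k + 1) (by omega),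
    ipow_eq_z (aV n) (2 * (k + 1) + 1) (-(2 * k + 1) - 2) (by omega)]
  simp only [sub_mul, ← map_pow, ← map_mul, zpow_ofNat, pow_zero, pow_one, mul_one, mul_assoc]

lemma K4 (k : ℕ) : (MonoidAlgebra.of F (V8n n) (aV n ^ (2 * (k + 1) - 1)) -
    MonoidAlgebra.of F (V8n n) ((aV n)⁻¹ ^ (2 * (k + 1) + 1))) *
      MonoidAlgebra.of F (V8n n) (bV n) ^ 3 =
    vX n F (((2 * k + 1 : ℕ) : ZMod (2 * n)), 3) := by
  have h1 := nf_int n (2 * k + 1) 3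
  have h2 := nf_tau_odd n (2 * k + 1) 3 3 (k + 1) (by decide) (by ring)
  push_cast at h1 h2
  unfold vX
  push_cast
  rw [h1, h2, pow_eq_z (aV n) (2 * (k + 1) - 1) (2 * k + 1) (by omega),
    ipow_eq_z (aV n) (2 * (k + 1) + 1) (-(2 * k + 1) - 2) (by omega)]
  simp only [sub_mul, ← map_pow, ← map_mul, zpow_ofNat, pow_zero, pow_one, mul_one, mul_assoc]

lemma K5 (k : ℕ) : MonoidAlgebra.of F (V8n n) (aV n ^ (2 * (k + 1) - 1)) -
    MonoidAlgebra.of F (V8n n) ((aV n)⁻¹ ^ (2 * (k + 1) - 1) * bV n ^ 2) =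
    vX n F (((2 * k + 1 : ℕ) : ZMod (2 * n)), 0) := by
  have h1 := nf_int n (2 * k + 1) 0
  have h2 := nf_tau_even n (2 * k + 1) 0 2 k (by simp) (by ring)
  push_cast at h1 h2
  unfold vX
  push_cast
  rw [h1, h2, pow_eq_z (aV n) (2 * (k + 1) - 1) (2 * k + 1) (by omega),
    ipow_eq_z (aV n) (2 * (k + 1) - 1) (-(2 * k + 1)) (by omega)]
  simp only [sub_mul, ← map_pow, ← map_mul, zpow_ofNat, pow_zero, pow_one, mul_one, mul_assoc]

lemma K6 (k : ℕ) : (MonoidAlgebra.of F (V8n n) (aV n ^ (2 * (k + 1) - 2)) -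
    MonoidAlgebra.of F (V8n n) ((aV n)⁻¹ ^ (2 * (k + 1)) * bV n ^ 2)) *
      MonoidAlgebra.of F (V8n n) (bV n) =
    vX n F (((2 * k : ℕ) : ZMod (2 * n)), 1) := by
  have h1 := nf_int n (2 * k) 1
  have h2 := nf_tau_odd n (2 * k) 1 3 k (by decide) (by ring)
  push_cast at h1 h2
  unfold vX
  push_cast
  rw [h1, h2, pow_eq_z (aV n) (2 * (k + 1) - 2) (2 * k) (by omega),
    ipow_eq_z (aV n) (2 * (k + 1)) (-(2 * k) - 2) (by omega)]
  simp only [sub_mul, ← map_pow, ← map_mul, zpow_ofNat, pow_zero, pow_one, mul_one, mul_assoc, ← pow_succ, Nat.reduceAdd]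

lemma orbVec_eq (i : Idx n) : orbVec F (gV n) (fun i => nf n (pX n i)) i = vX n F (pX n i) := by
  simp only [orbVec, vX, conj_nf]

lemma basis_eq_range : antiCentralizerBasisAinvB n F =
    Set.range (orbVec F (gV n) (fun i => nf n (pX n i))) := by
  ext x
  constructor
  · rintro (⟨k, hk, hk', h⟩ | ⟨k, hk, hk', h⟩)
    · obtain ⟨k, rfl⟩ : ∃ k', k = k' + 1 := ⟨k - 1, by omega⟩
      rcases h with rfl | rfl | rfl | rfl
      · exact ⟨.inl (⟨k, hk'⟩, 0), by rw [orbVec_eq, K1]; rfl⟩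
      · exact ⟨.inl (⟨k, hk'⟩, 2), by rw [orbVec_eq, K2]; rfl⟩
      · exact ⟨.inl (⟨k, hk'⟩, 1), by rw [orbVec_eq, K3]; rfl⟩
      · exact ⟨.inl (⟨k, hk'⟩, 3), by rw [orbVec_eq, K4]; rfl⟩
    · obtain ⟨k, rfl⟩ : ∃ k', k = k' + 1 := ⟨k - 1, by omega⟩
      rcases h with rfl | rfl
      · exact ⟨.inr (⟨k, hk'⟩, 0), by rw [orbVec_eq, K5]; rfl⟩
      · exact ⟨.inr (⟨k, hk'⟩, 1), by rw [orbVec_eq, K6]; rfl⟩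
  · rintro ⟨⟨⟨k, hk⟩, j⟩ | ⟨⟨k, hk⟩, j⟩, rfl⟩
    · refine Or.inl ⟨k + 1, by omega, hk, ?_⟩
      rw [orbVec_eq, K2, K1, K3, K4]
      fin_cases j
      · left; rfl
      · right; right; left; rfl
      · right; left; rfl
      · right; right; right; rfl
    · refine Or.inr ⟨k + 1, by omega, hk, ?_⟩
      rw [orbVec_eq, K5, K6]
      fin_cases j
      · left; rfl
      · right; rfl

end Final

/-- If `char F` is `0` or an odd prime, then the anti-centralizer
`C̄(a⁻¹b)` in `F V_{8n}` has dimension `4n−2` over `F` when `n` is odd and `4n−4`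
when `n` is even, and the set `antiCentralizerBasisAinvB n F` is a basis of it. -/
theorem antiCentralizer_ainvb_V8n (n : ℕ) (hn : 0 < n) (F : Type*) [Field F]
    (hchar : CharZero F ∨ ∃ p : ℕ, p.Prime ∧ Odd p ∧ CharP F p) :
    (Odd n →
      Module.finrank F
        (antiCentralizer F (MonoidAlgebra.of F (V8n n) ((aV n)⁻¹ * bV n))) = 4 * n - 2) ∧
    (Even n →
      Module.finrank F
        (antiCentralizer F (MonoidAlgebra.of F (V8n n) ((aV n)⁻¹ * bV n))) = 4 * n - 4) ∧
    LinearIndependent F ((↑) : antiCentralizerBasisAinvB n F → MonoidAlgebra F (V8n n)) ∧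
    Submodule.span F (antiCentralizerBasisAinvB n F) =
      antiCentralizer F (MonoidAlgebra.of F (V8n n) ((aV n)⁻¹ * bV n)) := by
  haveI : NeZero n := ⟨hn.ne'⟩
  have h2 : (2 : F) ≠ 0 := by
    rcases hchar with h | ⟨p, hp, hodd, hF⟩
    · exact two_ne_zero
    · intro h
      have h' : ((2 : ℕ) : F) = 0 := by exact_mod_cast h
      rw [CharP.cast_eq_zero_iff F p] at h'
      rw [Nat.prime_dvd_prime_iff_eq hp Nat.prime_two] at h'
      subst h'
      exact absurd hodd (by decide)
  have hττ : ∀ x, tauX n (tauX n x) = x := by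
    intro x
    apply nf_inj n
    have hgi : (gV n)⁻¹ = gV n := inv_eq_of_mul_eq_one_left (gV_sq n)
    rw [← conj_nf, ← conj_nf]
    calc (gV n)⁻¹ * ((gV n)⁻¹ * nf n x * gV n) * gV n
        = ((gV n)⁻¹ * (gV n)⁻¹) * nf n x * (gV n * gV n) := by simp only [mul_assoc]
      _ = nf n x := by rw [hgi, gV_sq]; simp
  obtain ⟨hli, hsp⟩ := orb_basis (F := F) h2 (gV n) (gV_sq n) (fun i => nf n (pX n i))
    ((nf_inj n).comp (pX_inj n))
    (by
      intro i j h
      rw [conj_nf] at h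
      have h := nf_inj n h
      have hq := pX_Q n i
      rw [h] at hq
      exact (QI_tau n (pX n j)).1 ⟨pX_Q n j, hq⟩)
    (by
      intro v hv
      obtain ⟨x, rfl⟩ : ∃ x, v = nf n x := ⟨_, (nf_evV n v).symm⟩
      rw [conj_nf] at hv
      have hv' : tauX n x ≠ x := fun h => hv (by rw [h])
      rcases (QI_tau n x).2 hv' with h | h
      · obtain ⟨i, hi⟩ := exists_pX n x h
        exact ⟨i, Or.inl (by rw [hi])⟩
      · obtain ⟨i, hi⟩ := exists_pX n _ h
        exact ⟨i, Or.inr (by rw [conj_nf, hi, hττ])⟩)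
  have hr := basis_eq_range n F
  have hdim : Module.finrank F (antiCentralizer F (MonoidAlgebra.of F (V8n n) ((aV n)⁻¹ * bV n)))
      = (n - 1) / 2 * 4 + n * 2 := by
    have := finrank_span_eq_card hli
    rw [hsp] at this
    simp only [Fintype.card_sum, Fintype.card_prod, Fintype.card_fin] at this
    exact this
  refine ⟨?_, ?_, ?_, ?_⟩
  · rintro ⟨c, rfl⟩
    rw [hdim]; omega
  · rintro ⟨c, rfl⟩
    rw [hdim]; omega
  · rw [hr]
    exact hli.linearIndepOn_id
  · rw [hr]; exact hsp
end

section
/- Let n be a positive integer and let F be a field whose characteristic is 0 or an odd rational prime p. Then in the group algebra F V_{8n}, the anti-centralizers of ba and b^{-1}a coincide: C̄(ba) = C̄(b^{-1}a). -/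
/-- `b²` commutes with `a`. -/
theorem bsq_comm_a (n : ℕ) : aV n * (bV n * bV n) = bV n * bV n * aV n := by
  have h4 : bV n ^ 4 = 1 := by
    have := PresentedGroup.one_of_mem (rels := V8nRels n)
      (x := (FreeGroup.of 1) ^ 4) (by simp [V8nRels])
    simp only [map_pow, map_mul, map_inv] at this
    exact this
  have h1 : (bV n * aV n) ^ 2 = 1 := by
    have := PresentedGroup.one_of_mem (rels := V8nRels n)
      (x := (FreeGroup.of 1 * FreeGroup.of 0) ^ 2) (by simp [V8nRels])
    simp only [map_pow, map_mul, map_inv] at this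
    exact this
  have h2 : ((bV n)⁻¹ * aV n) ^ 2 = 1 := by
    have := PresentedGroup.one_of_mem (rels := V8nRels n)
      (x := ((FreeGroup.of 1)⁻¹ * FreeGroup.of 0) ^ 2) (by simp [V8nRels])
    simp only [map_pow, map_mul, map_inv] at this
    exact this
  generalize aV n = a at *
  generalize bV n = b at *
  have e1 : b * a = a⁻¹ * b⁻¹ := by
    rw [← mul_inv_rev, eq_inv_iff_mul_eq_one, ← sq, h1]
  have e2 : b⁻¹ * a = a⁻¹ * b := by
    have : a⁻¹ * b = (b⁻¹ * a)⁻¹ := by simp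
    rw [this, eq_inv_iff_mul_eq_one, ← sq, h2]
  have e3 : b * a⁻¹ = a * b⁻¹ := by
    calc b * a⁻¹ = b * (a⁻¹ * b) * b⁻¹ := by group
      _ = a * b⁻¹ := by rw [← e2]; group
  have e4 : b * b = b⁻¹ * b⁻¹ := by
    rw [← mul_inv_rev, eq_inv_iff_mul_eq_one, ← h4]; simp only [pow_succ, pow_zero, one_mul, mul_assoc]
  calc a * (b * b) = a * b⁻¹ * b⁻¹ := by rw [e4, mul_assoc]
    _ = b * (a⁻¹ * b⁻¹) := by rw [← e3, mul_assoc]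
    _ = b * b * a := by rw [← e1, mul_assoc]

/-- `b²` is central in `V_{8n}`. -/
theorem bsq_central (n : ℕ) (g : V8n n) : g * (bV n * bV n) = bV n * bV n * g := by
  have : g ∈ Subgroup.centralizer {bV n * bV n} := by
    have hg : g ∈ Subgroup.closure (Set.range (PresentedGroup.of (rels := V8nRels n))) := by
      rw [PresentedGroup.closure_range_of]; trivial
    refine (Subgroup.closure_le _).2 ?_ hg
    rintro _ ⟨i, rfl⟩
    rw [SetLike.mem_coe, Subgroup.mem_centralizer_singleton_iff]
    fin_cases i
    · exact bsq_comm_a n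
    · exact (mul_assoc (bV n) (bV n) (bV n)).symm
  rwa [Subgroup.mem_centralizer_singleton_iff] at this

/-- Multiplication by a central unit does not change the anti-centralizer. -/
theorem antiCentralizer_central_mul (F : Type*) [CommSemiring F] {A : Type*} [Ring A]
    [Algebra F A] (z w β : A) (hz : ∀ x, x * z = z * x) (hw : w * z = 1) :
    antiCentralizer F (z * β) = antiCentralizer F β := by
  ext α
  change α * (z * β) = -(z * β * α) ↔ α * β = -(β * α)
  rw [← mul_assoc, hz, mul_assoc, mul_assoc, ← mul_neg]
  constructor
  · intro h
    have := congrArg (w * ·) h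
    simpa [← mul_assoc, hw] using this
  · intro h
    rw [h]

/-- If `char F` is `0` or an odd prime, then in `F V_{8n}` the
anti-centralizers of `ba` and `b⁻¹a` coincide. -/
theorem antiCentralizer_ba_eq_antiCentralizer_binva (n : ℕ) (hn : 0 < n)
    (F : Type*) [Field F]
    (hchar : CharZero F ∨ ∃ p : ℕ, p.Prime ∧ Odd p ∧ CharP F p) :
    antiCentralizer F (MonoidAlgebra.of F (V8n n) (bV n * aV n)) =
      antiCentralizer F (MonoidAlgebra.of F (V8n n) ((bV n)⁻¹ * aV n)) := by
  have key : MonoidAlgebra.of F (V8n n) (bV n * aV n) =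
      MonoidAlgebra.of F (V8n n) (bV n * bV n) *
        MonoidAlgebra.of F (V8n n) ((bV n)⁻¹ * aV n) := by
    rw [← map_mul]; congr 1; group
  rw [key]
  refine antiCentralizer_central_mul F _
    (MonoidAlgebra.of F (V8n n) (bV n * bV n)⁻¹) _ ?_ ?_
  · intro x
    induction x using MonoidAlgebra.induction_on with
    | of g => rw [← map_mul, ← map_mul, bsq_central]
    | add x y hx hy => rw [add_mul, mul_add, hx, hy]
    | smul r x hx => rw [smul_mul_assoc, mul_smul_comm, hx]
  · rw [← map_mul, inv_mul_cancel, map_one]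
end

section
/- Let n be an even positive integer. Then the group V_{8n} has exactly 2n+6 conjugacy classes. -/
/-- Explicit model of `V_{8n}` for `n = 2m`: the pair `(x, u)` stands for `a^x b^u`. -/
@[ext] structure VModel (m : ℕ) where
  x : ZMod (4 * m)
  u : ZMod 4

namespace VModel

variable {m : ℕ}

/-- reduction mod 4 -/
def c (m : ℕ) : ZMod (4 * m) →+* ZMod 4 := ZMod.castHom (Dvd.intro m rfl) (ZMod 4)

/-- sign of `b^u` -/
def s (m : ℕ) (u : ZMod 4) : ZMod (4 * m) := if u = 0 ∨ u = 2 then 1 else -1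

lemma s_mul (u v w : ZMod 4) : s m (u + v + 2 * u * w) = s m u * s m v := by
  have key : ∀ u v w : ZMod 4, (u + v + 2 * u * w = 0 ∨ u + v + 2 * u * w = 2) ↔
      ((u = 0 ∨ u = 2) ↔ (v = 0 ∨ v = 2)) := by decide
  unfold s
  simp only [key]
  by_cases h1 : u = 0 ∨ u = 2 <;> by_cases h2 : v = 0 ∨ v = 2 <;> simp [h1, h2]

lemma s_zero : s m 0 = 1 := by simp [s]

lemma s_sq (u : ZMod 4) : s m u * s m u = 1 := by
  unfold s; split_ifs <;> simp

lemma two_c_s (u : ZMod 4) (y : ZMod (4 * m)) : 2 * c m (s m u * y) = 2 * c m y := by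
  unfold s
  split_ifs
  · simp
  · have : ∀ z : ZMod 4, 2 * (-z) = 2 * z := by decide
    simp [this]

instance : Mul (VModel m) := ⟨fun p q => ⟨p.x + s m p.u * q.x, p.u + q.u + 2 * p.u * c m q.x⟩⟩
instance : One (VModel m) := ⟨⟨0, 0⟩⟩
instance : Inv (VModel m) := ⟨fun p => ⟨-(s m p.u * p.x), -p.u + 2 * p.u * c m p.x⟩⟩

@[simp] lemma mul_x (p q : VModel m) : (p * q).x = p.x + s m p.u * q.x := rfl
@[simp] lemma mul_u (p q : VModel m) : (p * q).u = p.u + q.u + 2 * p.u * c m q.x := rfl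
@[simp] lemma one_x : (1 : VModel m).x = 0 := rfl
@[simp] lemma one_u : (1 : VModel m).u = 0 := rfl
@[simp] lemma inv_x (p : VModel m) : (p⁻¹).x = -(s m p.u * p.x) := rfl
@[simp] lemma inv_u (p : VModel m) : (p⁻¹).u = -p.u + 2 * p.u * c m p.x := rfl

instance : Group (VModel m) := Group.ofLeftAxioms
  (by
    intro p q r
    ext
    · simp [s_mul]; ring
    · have h4 : (4 : ZMod 4) = 0 := by decide
      have := two_c_s q.u r.x
      simp only [mul_u, mul_x, map_add]
      linear_combination (-p.u) * this + (p.u * c m q.x * c m r.x) * h4)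
  (by intro p; ext <;> simp [s_zero])
  (by
    intro p
    have key : ∀ u w : ZMod 4, (-u + 2 * u * w = 0 ∨ -u + 2 * u * w = 2) ↔
      (u = 0 ∨ u = 2) := by decide
    have hs : s m (-p.u + 2 * p.u * c m p.x) = s m p.u := by
      unfold s; simp only [key]
    ext
    · simp [hs]
    · have key2 : ∀ u w : ZMod 4, -u + 2 * u * w + u + 2 * (-u + 2 * u * w) * w = 0 := by decide
      exact key2 _ _)

/-- underlying pairs -/
def toPair (m : ℕ) : VModel m ≃ ZMod (4 * m) × ZMod 4 where
  toFun p := (p.x, p.u)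
  invFun p := ⟨p.1, p.2⟩
  left_inv _ := rfl
  right_inv _ := rfl

/-- the generator a -/
def A (m : ℕ) : VModel m := ⟨1, 0⟩
/-- the generator b -/
def B (m : ℕ) : VModel m := ⟨0, 1⟩

lemma A_pow (k : ℕ) : (A m) ^ k = ⟨k, 0⟩ := by
  induction k with
  | zero => ext <;> simp
  | succ k ih => rw [pow_succ, ih]; ext <;> simp [A, s_zero]

lemma B_pow (k : ℕ) : (B m) ^ k = ⟨0, k⟩ := by
  induction k with
  | zero => ext <;> simp
  | succ k ih => rw [pow_succ, ih]; ext <;> simp [B]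

lemma two_x_eq_zero (hm : 0 < m) (x : ZMod (4 * m)) :
    2 * x = 0 ↔ x = 0 ∨ x = ((2 * m : ℕ) : ZMod (4 * m)) := by
  have : NeZero (4 * m) := ⟨by omega⟩
  constructor
  · intro h
    have hx : ((x.val : ℕ) : ZMod (4 * m)) = x := ZMod.natCast_zmod_val x
    have h2 : ((2 * x.val : ℕ) : ZMod (4 * m)) = 0 := by push_cast; rw [hx]; exact h
    rw [ZMod.natCast_eq_zero_iff] at h2
    have hlt := ZMod.val_lt x
    obtain ⟨k, hk⟩ := h2
    have hk2 : k < 2 := by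
      by_contra hcon
      have : 4 * m * 2 ≤ 4 * m * k := Nat.mul_le_mul_left _ (by omega)
      omega
    interval_cases k
    · left; rw [← hx, show x.val = 0 by omega]; simp
    · right; rw [← hx, show x.val = 2 * m by omega]
  · rintro (h | h)
    · simp [h]
    · rw [h]
      have : ((4 * m : ℕ) : ZMod (4 * m)) = 0 := ZMod.natCast_self _
      rw [← this]; push_cast; ring

lemma two_c (hm : 0 < m) {x : ZMod (4 * m)} (h : 2 * x = 0) : 2 * c m x = 0 := by
  have h4 : (4 : ZMod 4) = 0 := by decide
  rcases (two_x_eq_zero hm x).1 h with h | h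
  · simp [h]
  · rw [h, map_natCast]; push_cast
    linear_combination (m : ZMod 4) * h4

lemma two_x_card (hm : 0 < m) [NeZero (4 * m)] :
    (∑ x : ZMod (4 * m), if 2 * x = 0 then 1 else 0) = 2 := by
  rw [← Finset.card_filter]
  have : (Finset.univ.filter fun x : ZMod (4 * m) => 2 * x = 0)
      = {0, ((2 * m : ℕ) : ZMod (4 * m))} := by
    ext x; simp only [Finset.mem_filter, Finset.mem_univ, true_and, two_x_eq_zero hm,
      Finset.mem_insert, Finset.mem_singleton]
  rw [this, Finset.card_pair]
  intro h
  have := (ZMod.natCast_eq_zero_iff _ _).1 h.symm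
  have := Nat.le_of_dvd (by omega) this
  omega

lemma commute_iff (p q : VModel m) : Commute p q ↔
    (p.x + s m p.u * q.x = q.x + s m q.u * p.x ∧
     2 * p.u * c m q.x = 2 * q.u * c m p.x) := by
  rw [commute_iff_eq, VModel.ext_iff]
  simp only [mul_x, mul_u]
  rw [add_comm q.u p.u, add_right_inj]

/-- the type of commuting condition according to parities -/
def Cond (u v : ZMod 4) (i k : ZMod (4 * m)) : Prop :=
  (u = 0 ∨ u = 2) ∧ (v = 0 ∨ v = 2) ∨
  (u = 0 ∨ u = 2) ∧ ¬ (v = 0 ∨ v = 2) ∧ 2 * i = 0 ∨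
  ¬ (u = 0 ∨ u = 2) ∧ (v = 0 ∨ v = 2) ∧ 2 * k = 0 ∨
  ¬ (u = 0 ∨ u = 2) ∧ ¬ (v = 0 ∨ v = 2) ∧ 2 * (i - k) = 0

instance (u v : ZMod 4) (i k : ZMod (4 * m)) : Decidable (Cond u v i k) := by
  unfold Cond; infer_instance

lemma commute_iff_cond (hm : 0 < m) (p q : VModel m) :
    Commute p q ↔ Cond p.u q.u p.x q.x := by
  have ev : ∀ u : ZMod 4, (u = 0 ∨ u = 2) → 2 * u = 0 := by decide
  have od : ∀ u : ZMod 4, ¬ (u = 0 ∨ u = 2) → 2 * u = 2 := by decide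
  rw [commute_iff, Cond]
  by_cases hu : p.u = 0 ∨ p.u = 2 <;> by_cases hv : q.u = 0 ∨ q.u = 2
  · simp [s, hu, hv, ev _ hu, ev _ hv, add_comm]
  · simp only [s, hu, hv, ev _ hu, od _ hv, if_true, if_false]
    simp only [true_and, false_and, not_false_eq_true, not_true_eq_false, and_false, false_or,
      or_false]
    constructor
    · rintro ⟨h, -⟩; linear_combination h
    · intro h; exact ⟨by linear_combination h, by rw [two_c hm h]; simp⟩
  · simp only [s, hu, hv, od _ hu, ev _ hv, if_true, if_false]
    simp only [true_and, false_and, not_false_eq_true, not_true_eq_false, and_false, false_or,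
      or_false]
    constructor
    · rintro ⟨h, -⟩; linear_combination -h
    · intro h; exact ⟨by linear_combination -h, by rw [two_c hm h]; simp⟩
  · simp only [s, hu, hv, od _ hu, od _ hv, if_false]
    simp only [true_and, false_and, not_false_eq_true, and_false, false_or]
    constructor
    · rintro ⟨h, -⟩; linear_combination h
    · intro h
      refine ⟨by linear_combination h, ?_⟩
      have := two_c hm h
      rw [map_sub] at this
      linear_combination -this

lemma sum4 (f : ZMod 4 → ℕ) : ∑ u, f u = f 0 + f 1 + f 2 + f 3 := Fin.sum_univ_four f

lemma card_comm (hm : 0 < m) :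
    Nat.card { p : VModel m × VModel m // Commute p.1 p.2 } = (4 * m + 6) * (16 * m) := by
  have : NeZero (4 * m) := ⟨by omega⟩
  let e : { p : VModel m × VModel m // Commute p.1 p.2 } ≃
      { t : ZMod 4 × ZMod 4 × ZMod (4 * m) × ZMod (4 * m) // Cond t.1 t.2.1 t.2.2.1 t.2.2.2 } :=
    { toFun := fun p => ⟨(p.1.1.u, p.1.2.u, p.1.1.x, p.1.2.x), (commute_iff_cond hm _ _).1 p.2⟩
      invFun := fun t => ⟨(⟨t.1.2.2.1, t.1.1⟩, ⟨t.1.2.2.2, t.1.2.1⟩),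
        (commute_iff_cond hm _ _).2 t.2⟩
      left_inv := fun _ => rfl
      right_inv := fun _ => rfl }
  rw [Nat.card_congr e, Nat.card_eq_fintype_card, Fintype.card_subtype, Finset.card_filter]
  simp only [Fintype.sum_prod_type]
  have h00 : ∀ u v : ZMod 4, (u = 0 ∨ u = 2) → (v = 0 ∨ v = 2) →
      (∑ i : ZMod (4 * m), ∑ k : ZMod (4 * m), if Cond u v i k then 1 else 0)
        = (4 * m) * (4 * m) := by
    intro u v hu hv
    simp [Cond, hu, hv, ZMod.card]
  have h01 : ∀ u v : ZMod 4, (u = 0 ∨ u = 2) → ¬ (v = 0 ∨ v = 2) →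
      (∑ i : ZMod (4 * m), ∑ k : ZMod (4 * m), if Cond u v i k then 1 else 0)
        = (4 * m) * 2 := by
    intro u v hu hv
    rw [Finset.sum_comm]
    simp only [Cond, hu, hv, true_and, false_and, not_false_eq_true, not_true_eq_false,
      and_false, false_or, or_false, two_x_card hm]
    simp [ZMod.card]
  have h10 : ∀ u v : ZMod 4, ¬ (u = 0 ∨ u = 2) → (v = 0 ∨ v = 2) →
      (∑ i : ZMod (4 * m), ∑ k : ZMod (4 * m), if Cond u v i k then 1 else 0)
        = (4 * m) * 2 := by
    intro u v hu hv
    simp only [Cond, hu, hv, true_and, false_and, not_false_eq_true, not_true_eq_false,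
      and_false, false_or, or_false, two_x_card hm]
    simp [ZMod.card]
  have h11 : ∀ u v : ZMod 4, ¬ (u = 0 ∨ u = 2) → ¬ (v = 0 ∨ v = 2) →
      (∑ i : ZMod (4 * m), ∑ k : ZMod (4 * m), if Cond u v i k then 1 else 0)
        = (4 * m) * 2 := by
    intro u v hu hv
    simp only [Cond, hu, hv, true_and, false_and, not_false_eq_true,
      and_false, false_or]
    have : ∀ i : ZMod (4 * m), (∑ k : ZMod (4 * m), if 2 * (i - k) = 0 then 1 else 0) = 2 := by
      intro i
      rw [← two_x_card hm]
      exact (Equiv.subLeft i).sum_comp (fun k : ZMod (4 * m) => if 2 * k = 0 then 1 else 0)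
    simp only [this]
    simp [ZMod.card]
  simp only [sum4]
  rw [h00 0 0 (by decide) (by decide), h00 0 2 (by decide) (by decide),
    h00 2 0 (by decide) (by decide), h00 2 2 (by decide) (by decide),
    h01 0 1 (by decide) (by decide), h01 0 3 (by decide) (by decide),
    h01 2 1 (by decide) (by decide), h01 2 3 (by decide) (by decide),
    h10 1 0 (by decide) (by decide), h10 3 0 (by decide) (by decide),
    h10 1 2 (by decide) (by decide), h10 3 2 (by decide) (by decide),
    h11 1 1 (by decide) (by decide), h11 1 3 (by decide) (by decide),
    h11 3 1 (by decide) (by decide), h11 3 3 (by decide) (by decide)]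
  ring

lemma card_model : Nat.card (VModel m) = 16 * m := by
  rw [Nat.card_congr (toPair m), Nat.card_prod, Nat.card_zmod, Nat.card_zmod]
  ring

lemma card_classes (hm : 0 < m) : Nat.card (ConjClasses (VModel m)) = 4 * m + 6 := by
  have h := card_comm_eq_card_conjClasses_mul_card (VModel m)
  rw [card_comm hm, card_model] at h
  exact (Nat.eq_of_mul_eq_mul_right (by omega) h).symm

/-- the homomorphism from the presented group to the model -/
def gens (m : ℕ) : Fin 2 → VModel m := ![A m, B m]

lemma gens_rels (m : ℕ) : ∀ r ∈ V8nRels (2 * m), FreeGroup.lift (gens m) r = 1 := by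
  intro r hr
  simp only [V8nRels, Set.mem_insert_iff, Set.mem_singleton_iff] at hr
  have h4 : (4 : ZMod 4) = 0 := by decide
  have hs : s m 1 = -1 := by
    have : ¬ ((1 : ZMod 4) = 0 ∨ (1 : ZMod 4) = 2) := by decide
    simp [s, this]
  have hs' : s m (-1) = -1 := by
    have : ¬ ((-1 : ZMod 4) = 0 ∨ (-1 : ZMod 4) = 2) := by decide
    rw [s, if_neg this]
  rcases hr with rfl | rfl | rfl | rfl
  · simp only [map_pow, FreeGroup.lift_apply_of, gens, Matrix.cons_val_zero, A_pow]
    ext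
    · have : ((4 * m : ℕ) : ZMod (4 * m)) = 0 := ZMod.natCast_self _
      rw [show 2 * (2 * m) = 4 * m by ring]; exact this
    · rfl
  · rw [map_pow, FreeGroup.lift_apply_of, show gens m 1 = B m from rfl, B_pow]
    ext
    · rfl
    · exact h4
  · simp only [map_pow, map_mul, FreeGroup.lift_apply_of, gens, Matrix.cons_val_one,
      Matrix.cons_val_zero, pow_two]
    ext
    · simp [A, B, hs, show (1 + 2 : ZMod 4) = -1 by decide, hs']
    · simp [A, B, hs]; decide
  · simp only [map_pow, map_mul, map_inv, FreeGroup.lift_apply_of, gens, Matrix.cons_val_one,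
      Matrix.cons_val_zero, pow_two]
    ext
    · simp [A, B, hs, hs', show (-1 + -2 : ZMod 4) = 1 by decide]
    · simp [A, B, hs, hs']; decide

/-- the homomorphism from the presented group to the model -/
def phi (m : ℕ) : V8n (2 * m) →* VModel m := PresentedGroup.toGroup (gens_rels m)

lemma phi_a : phi m (aV (2 * m)) = A m := PresentedGroup.toGroup.of (gens_rels m)
lemma phi_b : phi m (bV (2 * m)) = B m := PresentedGroup.toGroup.of (gens_rels m)

lemma rel_one {n : ℕ} {r : FreeGroup (Fin 2)} (h : r ∈ V8nRels n) :
    PresentedGroup.mk (V8nRels n) r = 1 := PresentedGroup.one_of_mem h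

lemma a_pow (n : ℕ) : aV n ^ (2 * n) = 1 := by
  have := rel_one (n := n) (r := (FreeGroup.of 0) ^ (2 * n)) (by simp [V8nRels])
  simp only [map_pow, map_mul, map_inv] at this
  exact this
lemma b_pow (n : ℕ) : bV n ^ 4 = 1 := by
  have := rel_one (n := n) (r := (FreeGroup.of 1) ^ 4) (by simp [V8nRels])
  simp only [map_pow, map_mul, map_inv] at this
  exact this
lemma ba_pow (n : ℕ) : (bV n * aV n) ^ 2 = 1 := by
  have := rel_one (n := n) (r := (FreeGroup.of 1 * FreeGroup.of 0) ^ 2) (by simp [V8nRels])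
  simp only [map_pow, map_mul, map_inv] at this
  exact this
lemma bia_pow (n : ℕ) : ((bV n)⁻¹ * aV n) ^ 2 = 1 := by
  have := rel_one (n := n) (r := ((FreeGroup.of 1)⁻¹ * FreeGroup.of 0) ^ 2) (by simp [V8nRels])
  simp only [map_pow, map_mul, map_inv] at this
  exact this

end VModel

section NormalForm

lemma group_conj {G : Type*} [Group G] {a b : G} (hb : b ^ 4 = 1) (h1 : (b * a) ^ 2 = 1)
    (h2 : (b⁻¹ * a) ^ 2 = 1) :
    Commute (b ^ 2) a ∧ b * a * b⁻¹ = a⁻¹ * b ^ 2 := by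
  have e1 : b * a * b = a⁻¹ := by
    rw [eq_inv_iff_mul_eq_one]; rw [pow_two] at h1; simpa [mul_assoc] using h1
  have e2 : b⁻¹ * a * b⁻¹ = a⁻¹ := by
    rw [eq_inv_iff_mul_eq_one]; rw [pow_two] at h2; simpa [mul_assoc] using h2
  have hz : (b ^ 2)⁻¹ = b ^ 2 := by
    rw [inv_eq_iff_mul_eq_one, ← pow_add]; exact hb
  have e3 : a = b ^ 2 * a * b ^ 2 := by
    have : b * (b⁻¹ * a * b⁻¹) * b = b * (b * a * b) * b := by rw [e1, e2]
    calc a = b * (b⁻¹ * a * b⁻¹) * b := by group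
      _ = b * (b * a * b) * b := this
      _ = b ^ 2 * a * b ^ 2 := by simp [pow_two, mul_assoc]
  refine ⟨?_, ?_⟩
  · have : b ^ 2 * a = a * (b ^ 2)⁻¹ := by
      rw [eq_mul_inv_iff_mul_eq]; exact e3.symm
    rw [hz] at this
    exact this
  · calc b * a * b⁻¹ = (b * a * b) * (b ^ 2)⁻¹ := by group
      _ = _ := by rw [e1, hz]

lemma group_conj_zpow {G : Type*} [Group G] {a b : G} (hb : b ^ 4 = 1) (h1 : (b * a) ^ 2 = 1)
    (h2 : (b⁻¹ * a) ^ 2 = 1) (i j : ℤ) :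
    b * (a ^ i * b ^ j) = a ^ (-i) * b ^ (2 * i + 1 + j) := by
  obtain ⟨hc, he⟩ := group_conj hb h1 h2
  have h : b * a ^ i * b⁻¹ = a ^ (-i) * b ^ (2 * i) := by
    rw [← conj_zpow, he, (hc.symm.inv_left).mul_zpow, inv_zpow', ← zpow_natCast b 2, ← zpow_mul]
    simp
  calc b * (a ^ i * b ^ j) = (b * a ^ i * b⁻¹) * (b * b ^ j) := by group
    _ = _ := by rw [h, mul_assoc, ← zpow_one_add, ← zpow_add]; congr 2; ring

end NormalForm

namespace VModel
variable {m : ℕ}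

lemma normal_form (n : ℕ) (g : V8n n) : ∃ i j : ℤ, g = aV n ^ i * bV n ^ j := by
  have hg : g ∈ Subgroup.closure (Set.range (PresentedGroup.of (rels := V8nRels n))) := by
    rw [PresentedGroup.closure_range_of]; trivial
  have hbm := group_conj_zpow (b_pow n) (ba_pow n) (bia_pow n)
  have binv : (bV n)⁻¹ = bV n * bV n * bV n := by
    rw [inv_eq_iff_mul_eq_one, ← b_pow n]; simp only [pow_succ, pow_zero, one_mul, mul_assoc]
  induction hg using Subgroup.closure_induction_left with
  | one => exact ⟨0, 0, by simp⟩
  | mul_left x hx y _ ih =>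
    obtain ⟨i, j, rfl⟩ := ih
    obtain ⟨t, rfl⟩ := hx
    fin_cases t
    · exact ⟨1 + i, j, by rw [zpow_one_add, mul_assoc]; rfl⟩
    · exact ⟨_, _, hbm i j⟩
  | inv_mul_cancel x hx y _ ih =>
    obtain ⟨i, j, rfl⟩ := ih
    obtain ⟨t, rfl⟩ := hx
    fin_cases t
    · exact ⟨-1 + i, j, by rw [zpow_add, zpow_neg_one, mul_assoc]; rfl⟩
    · have h : ∃ i' j' : ℤ, (bV n)⁻¹ * (aV n ^ i * bV n ^ j) = aV n ^ i' * bV n ^ j' := by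
        rw [binv, mul_assoc, mul_assoc, hbm, hbm, hbm]
        exact ⟨_, _, rfl⟩
      exact h

lemma A_zpow (k : ℤ) : (A m) ^ k = ⟨k, 0⟩ := by
  obtain ⟨k, rfl | rfl⟩ := k.eq_nat_or_neg
  · rw [zpow_natCast, A_pow]; simp
  · rw [zpow_neg, zpow_natCast, A_pow]; ext <;> simp [s_zero]

lemma B_zpow (k : ℤ) : (B m) ^ k = ⟨0, k⟩ := by
  obtain ⟨k, rfl | rfl⟩ := k.eq_nat_or_neg
  · rw [zpow_natCast, B_pow]; simp
  · rw [zpow_neg, zpow_natCast, B_pow]; ext <;> simp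

lemma phi_form (i j : ℤ) : phi m (aV (2 * m) ^ i * bV (2 * m) ^ j) = ⟨i, j⟩ := by
  rw [map_mul, map_zpow, map_zpow, phi_a, phi_b, A_zpow, B_zpow]
  ext <;> simp

lemma phi_bij : Function.Bijective (phi m) := by
  constructor
  · rw [injective_iff_map_eq_one]
    intro g hg
    obtain ⟨i, j, rfl⟩ := normal_form _ g
    rw [phi_form, VModel.ext_iff] at hg
    obtain ⟨h1, h2⟩ := hg
    obtain ⟨k, rfl⟩ := (ZMod.intCast_zmod_eq_zero_iff_dvd i (4 * m)).1 h1
    obtain ⟨l, rfl⟩ := (ZMod.intCast_zmod_eq_zero_iff_dvd j 4).1 h2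
    rw [zpow_mul, zpow_mul, zpow_natCast, zpow_natCast, b_pow,
      show 4 * m = 2 * (2 * m) by ring, a_pow]
    simp
  · rintro ⟨x, u⟩
    obtain ⟨i, rfl⟩ := ZMod.intCast_surjective x
    obtain ⟨j, rfl⟩ := ZMod.intCast_surjective u
    exact ⟨_, phi_form i j⟩

end VModel

/-- If `n` is an even positive integer, then `V_{8n}` has exactly
`2n + 6` conjugacy classes. -/
theorem card_conjClasses_V8n_even (n : ℕ) (hn : 0 < n) (hev : Even n) :
    Nat.card (ConjClasses (V8n n)) = 2 * n + 6 := by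
  obtain ⟨m, rfl⟩ := even_iff_two_dvd.1 hev
  let e : V8n (2 * m) ≃* VModel m := MulEquiv.ofBijective (VModel.phi m) VModel.phi_bij
  have hb : Function.Bijective (ConjClasses.map e.toMonoidHom) := by
    constructor
    · intro p q
      refine Quotient.inductionOn₂ p q ?_
      intro x y h
      have h' : IsConj (e x) (e y) := ConjClasses.mk_eq_mk_iff_isConj.1 h
      have := e.symm.toMonoidHom.map_isConj h'
      exact ConjClasses.mk_eq_mk_iff_isConj.2 (by simpa using this)
    · exact ConjClasses.map_surjective e.surjective
  rw [Nat.card_congr (Equiv.ofBijective _ hb), VModel.card_classes (by omega)]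
  ring
end
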